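/- arXiv:0805.2338 — 5 statements merged into one kernel-verified Lean document; each statement's English description precedes it below -/
import Mathlib

section
/- Let f, h ∈ K(x₁,…,xₙ) and f', h' ∈ K(y₁,…,yₘ) be non-constant rational functions. Then the following are equivalent: (A) there exists g ∈ K(t) with f = g∘h and f' = g∘h'; (B) h − h' divides f − f' in the ring K(x₁,…,xₙ) ⊗_K K(y₁,…,yₘ). -/
open MvPolynomial TensorProduct

/-- Substitution of an element `a` of a field extension of `K` into a univariate
rational function `g ∈ K(t)` (the composition `g ∘ a`). -/
noncomputable def ratEval {K : Type*} [Field K] {L : Type*} [Field L] [Algebra K L]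
    (g : RatFunc K) (a : L) : L :=
  Polynomial.aeval a g.num / Polynomial.aeval a g.denom

section CommonLeftComponentHelpers

lemma clc_forward {K L M : Type*} [Field K] [Field L] [Field M] [Algebra K L] [Algebra K M]
    (g : RatFunc K) (f h : L) (f' h' : M) (hf0 : f ≠ 0) (hf0' : f' ≠ 0)
    (hf : f = ratEval g h) (hf' : f' = ratEval g h') :
    (h ⊗ₜ[K] (1 : M) - (1 : L) ⊗ₜ[K] h') ∣ (f ⊗ₜ[K] (1 : M) - (1 : L) ⊗ₜ[K] f') := by
  unfold ratEval at hf hf'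
  have hq : Polynomial.aeval h g.denom ≠ 0 := by
    intro h0; rw [h0, div_zero] at hf; exact hf0 hf
  have hq' : Polynomial.aeval h' g.denom ≠ 0 := by
    intro h0; rw [h0, div_zero] at hf'; exact hf0' hf'
  have hdvd : ∀ p : Polynomial K, (h ⊗ₜ[K] (1 : M) - (1 : L) ⊗ₜ[K] h') ∣
      ((Polynomial.aeval h p) ⊗ₜ[K] (1 : M) - (1 : L) ⊗ₜ[K] (Polynomial.aeval h' p)) := by
    intro p
    have e1 : (Polynomial.aeval h p) ⊗ₜ[K] (1 : M) =
        Polynomial.aeval (h ⊗ₜ[K] (1 : M)) p :=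
      (Polynomial.aeval_algHom_apply
        (Algebra.TensorProduct.includeLeft : L →ₐ[K] L ⊗[K] M) h p).symm
    have e2 : (1 : L) ⊗ₜ[K] (Polynomial.aeval h' p) =
        Polynomial.aeval ((1 : L) ⊗ₜ[K] h') p :=
      (Polynomial.aeval_algHom_apply
        (Algebra.TensorProduct.includeRight : M →ₐ[K] L ⊗[K] M) h' p).symm
    rw [e1, e2, ← Polynomial.eval_map_algebraMap, ← Polynomial.eval_map_algebraMap]
    exact Polynomial.sub_dvd_eval_sub _ _ _
  obtain ⟨a, ha⟩ := hdvd g.num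
  obtain ⟨b, hb⟩ := hdvd g.denom
  generalize Polynomial.aeval h g.num = p at *
  generalize Polynomial.aeval h' g.num = p' at *
  generalize Polynomial.aeval h g.denom = q at *
  generalize Polynomial.aeval h' g.denom = q' at *
  have E : f ⊗ₜ[K] (1 : M) - (1 : L) ⊗ₜ[K] f' =
      (q⁻¹ ⊗ₜ[K] q'⁻¹) * ((p ⊗ₜ[K] (1 : M) - (1 : L) ⊗ₜ[K] p') * ((1 : L) ⊗ₜ[K] q')
        - (q ⊗ₜ[K] (1 : M) - (1 : L) ⊗ₜ[K] q') * ((1 : L) ⊗ₜ[K] p')) := by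
    subst hf hf'
    simp only [sub_mul, mul_sub, Algebra.TensorProduct.tmul_mul_tmul, one_mul, mul_one,
      inv_mul_cancel₀ hq, inv_mul_cancel₀ hq', div_eq_mul_inv]
    rw [mul_comm p' q', inv_mul_cancel_left₀ hq' p', mul_comm p, mul_comm p']
    abel
  rw [E, ha, hb]
  exact ⟨q⁻¹ ⊗ₜ[K] q'⁻¹ * (a * ((1 : L) ⊗ₜ[K] q') - b * ((1 : L) ⊗ₜ[K] p')), by ring⟩

lemma clc_field {F L M : Type*} [Field F] [Field L] [Field M] [Algebra F L] [Algebra F M]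
    (f : L) (f' : M) (e : f ⊗ₜ[F] (1 : M) = (1 : L) ⊗ₜ[F] f') :
    ∃ g : F, f = algebraMap F L g ∧ f' = algebraMap F M g := by
  obtain ⟨φ, hφ⟩ := LinearMap.exists_leftInverse_of_injective (Algebra.linearMap F L)
    (LinearMap.ker_eq_bot.mpr (algebraMap F L).injective)
  obtain ⟨ψ, hψ⟩ := LinearMap.exists_leftInverse_of_injective (Algebra.linearMap F M)
    (LinearMap.ker_eq_bot.mpr (algebraMap F M).injective)
  have h1 : φ 1 = 1 := by simpa using LinearMap.congr_fun hφ 1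
  have h2 : ψ 1 = 1 := by simpa using LinearMap.congr_fun hψ 1
  have e1 := congrArg (fun x => TensorProduct.lid F M (LinearMap.rTensor M φ x)) e
  have e2 := congrArg (fun x => TensorProduct.rid F L (LinearMap.lTensor L ψ x)) e
  simp [h1] at e1
  simp [h2] at e2
  have e3 : ψ f' = φ f := by
    rw [← e1]; simp [h2]
  refine ⟨φ f, ?_, ?_⟩
  · rw [← e3, Algebra.algebraMap_eq_smul_one]; exact e2
  · rw [← e1, Algebra.algebraMap_eq_smul_one]

lemma clc_transcendental {K : Type*} [Field K] {σ : Type*}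
    (h : FractionRing (MvPolynomial σ K))
    (hh : h ∉ Set.range (algebraMap K (FractionRing (MvPolynomial σ K)))) :
    Transcendental K h := by
  intro halg
  have hint : IsIntegral K h := halg.isIntegral
  obtain ⟨p, rfl⟩ := IsIntegrallyClosed.isIntegral_iff.mp
    (hint.tower_top (A := MvPolynomial σ K))
  have hp : IsIntegral K p :=
    (isIntegral_algebraMap_iff (IsFractionRing.injective (MvPolynomial σ K) _)).mp hint
  have hq : IsIntegral K (p - C (constantCoeff p)) :=
    hp.sub (isIntegral_algebraMap (x := constantCoeff p))
  by_cases h0 : p - C (constantCoeff p) = 0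
  · apply hh
    refine ⟨constantCoeff p, ?_⟩
    rw [IsScalarTower.algebraMap_apply K (MvPolynomial σ K)]
    rw [sub_eq_zero] at h0
    exact congrArg _ h0.symm
  · have hu := hq.isUnit h0
    have := hu.map (constantCoeff (σ := σ) (R := K))
    simp at this

lemma clc_backward {K L M : Type*} [Field K] [Field L] [Field M] [Algebra K L] [Algebra K M]
    (f h : L) (f' h' : M) (ht : Transcendental K h) (ht' : Transcendental K h')
    (hd : (h ⊗ₜ[K] (1 : M) - (1 : L) ⊗ₜ[K] h') ∣ (f ⊗ₜ[K] (1 : M) - (1 : L) ⊗ₜ[K] f')) :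
    ∃ g : RatFunc K, f = ratEval g h ∧ f' = ratEval g h' := by
  have i1 := transcendental_iff_injective.mp ht
  have i2 := transcendental_iff_injective.mp ht'
  let φ : RatFunc K →ₐ[K] L := RatFunc.liftAlgHom (Polynomial.aeval h)
    (nonZeroDivisors_le_comap_nonZeroDivisors_of_injective _ i1)
  let ψ : RatFunc K →ₐ[K] M := RatFunc.liftAlgHom (Polynomial.aeval h')
    (nonZeroDivisors_le_comap_nonZeroDivisors_of_injective _ i2)
  have hφ : ∀ g, φ g = ratEval g h := fun g => RatFunc.liftAlgHom_apply _ _ _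
  have hψ : ∀ g, ψ g = ratEval g h' := fun g => RatFunc.liftAlgHom_apply _ _ _
  letI : Algebra (RatFunc K) L := φ.toRingHom.toAlgebra
  letI : Algebra (RatFunc K) M := ψ.toRingHom.toAlgebra
  haveI : IsScalarTower K (RatFunc K) L := IsScalarTower.of_algebraMap_eq fun r =>
    (φ.commutes r).symm
  haveI : IsScalarTower K (RatFunc K) M := IsScalarTower.of_algebraMap_eq fun r =>
    (ψ.commutes r).symm
  let π : L ⊗[K] M →ₐ[K] L ⊗[RatFunc K] M :=
    Algebra.TensorProduct.mapOfCompatibleSMul (RatFunc K) K K L M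
  have hX : algebraMap (RatFunc K) L RatFunc.X = h := by
    change φ _ = _
    rw [hφ]; simp [ratEval]
  have hX' : algebraMap (RatFunc K) M RatFunc.X = h' := by
    change ψ _ = _
    rw [hψ]; simp [ratEval]
  have z : h ⊗ₜ[RatFunc K] (1 : M) - (1 : L) ⊗ₜ[RatFunc K] h' = 0 := by
    rw [← hX, ← hX', Algebra.algebraMap_eq_smul_one, Algebra.algebraMap_eq_smul_one,
      TensorProduct.smul_tmul, sub_self]
  have hd' := map_dvd π hd
  simp only [map_sub, π, Algebra.TensorProduct.mapOfCompatibleSMul_tmul] at hd'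
  rw [z, zero_dvd_iff, sub_eq_zero] at hd'
  obtain ⟨g, h1, h2⟩ := clc_field f f' hd'
  exact ⟨g, h1.trans (hφ g), h2.trans (hψ g)⟩

end CommonLeftComponentHelpers

/-- For non-constant `f, h ∈ K(x₁,…,xₙ)` and `f', h' ∈ K(y₁,…,yₘ)`,
there exists `g ∈ K(t)` with `f = g∘h` and `f' = g∘h'` if and only if
`h − h'` divides `f − f'` in `K(x) ⊗_K K(y)`. -/
theorem exists_common_left_component_iff_dvd_in_tensor
    {K : Type*} [Field K] {n m : ℕ}
    (f h : FractionRing (MvPolynomial (Fin n) K))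
    (f' h' : FractionRing (MvPolynomial (Fin m) K))
    (hf : f ∉ Set.range (algebraMap K (FractionRing (MvPolynomial (Fin n) K))))
    (hh : h ∉ Set.range (algebraMap K (FractionRing (MvPolynomial (Fin n) K))))
    (hf' : f' ∉ Set.range (algebraMap K (FractionRing (MvPolynomial (Fin m) K))))
    (hh' : h' ∉ Set.range (algebraMap K (FractionRing (MvPolynomial (Fin m) K)))) :
    (∃ g : RatFunc K, f = ratEval g h ∧ f' = ratEval g h') ↔
      ((h ⊗ₜ[K] 1 - 1 ⊗ₜ[K] h') ∣ (f ⊗ₜ[K] 1 - 1 ⊗ₜ[K] f') :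
        Prop) := by
  constructor
  · rintro ⟨g, h1, h2⟩
    exact clc_forward g f h f' h' (fun e => hf ⟨0, by rw [e, map_zero]⟩)
      (fun e => hf' ⟨0, by rw [e, map_zero]⟩) h1 h2
  · intro hd
    exact clc_backward f h f' h' (clc_transcendental h hh) (clc_transcendental h' hh') hd
end

section
/- Let f ∈ K(x₁,…,xₙ) be non-constant, with K(x)/K of transcendence degree n. The map sending an equivalence class [(g,h)] of uni-multivariate decompositions of f to the field K(h) is a bijection between equivalence classes of uni-multivariate decompositions of f and intermediate fields F with K(f) ⊆ F ⊆ K(x₁,…,xₙ) of transcendence degree 1 over K. -/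
open MvPolynomial

/-- A field extension has transcendence degree one iff some single element forms a
transcendence basis. -/
def TrDegOne (K : Type*) (F : Type*) [Field K] [Field F] [Algebra K F] : Prop :=
  ∃ t : F, IsTranscendenceBasis K (fun _ : Unit => t)

/-- Kronecker substitution `x_i ↦ t^(d^i)` is injective on polynomials of degree `< d`
in each variable. -/
lemma kron_ne_zero {K : Type*} [Field K] {n : ℕ} (d : ℕ) (P : MvPolynomial (Fin n) K)
    (hP : P ≠ 0) (hd : ∀ i, P.degreeOf i < d) :
    MvPolynomial.aeval (fun i : Fin n => (Polynomial.X : Polynomial K) ^ (d ^ (i : ℕ))) P ≠ 0 := by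
  classical
  obtain ⟨s, hs⟩ := MvPolynomial.ne_zero_iff.mp hP
  intro h0
  apply hs
  have hmem : s ∈ P.support := MvPolynomial.mem_support_iff.mpr hs
  have hlt : ∀ u ∈ P.support, ∀ i, u i < d := fun u hu i =>
    lt_of_le_of_lt (MvPolynomial.monomial_le_degreeOf i hu) (hd i)
  have hinj : ∀ u ∈ P.support, ∑ i : Fin n, d ^ (i : ℕ) * u i = ∑ i : Fin n, d ^ (i : ℕ) * s i → u = s := by
    intro u hu he
    have : finFunctionFinEquiv (fun i => (⟨u i, hlt u hu i⟩ : Fin d)) =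
        finFunctionFinEquiv (fun i => (⟨s i, hlt s hmem i⟩ : Fin d)) := by
      apply Fin.ext
      rw [finFunctionFinEquiv_apply, finFunctionFinEquiv_apply]
      simpa [mul_comm] using he
    have h2 := finFunctionFinEquiv.injective this
    ext i
    have := congrFun h2 i
    simpa using this
  have hc := congrArg (fun q => Polynomial.coeff q (∑ i : Fin n, d ^ (i : ℕ) * s i)) h0
  simp only [MvPolynomial.aeval_def, MvPolynomial.eval₂_eq', ← pow_mul,
    Finset.prod_pow_eq_pow_sum, Polynomial.algebraMap_eq, Polynomial.finsetSum_coeff,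
    Polynomial.coeff_C_mul, Polynomial.coeff_X_pow, Polynomial.coeff_zero] at hc
  rw [Finset.sum_eq_single s] at hc
  · simpa using hc
  · intro u hu hne
    rw [if_neg, mul_zero]
    intro he
    exact hne (hinj u hu he.symm)
  · intro h
    exact absurd hmem h

/-- A place of `K(x₁,…,xₙ)` with values in `K(t)`, defined at `f` with transcendental value, whose
ring of definition is integrally closed. -/
lemma exists_place {K : Type*} [Field K] {n : ℕ}
    (f : FractionRing (MvPolynomial (Fin n) K))
    (hf : f ∉ Set.range (algebraMap K (FractionRing (MvPolynomial (Fin n) K)))) :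
    ∃ (O : Subalgebra K (FractionRing (MvPolynomial (Fin n) K))) (ψ : O →ₐ[K] RatFunc K),
      (∀ y, IsIntegral O y → y ∈ O) ∧ ∃ hfO : f ∈ O, Transcendental K (ψ ⟨f, hfO⟩) := by
  obtain ⟨p, q, hq, rfl⟩ := IsFractionRing.div_surjective (A := MvPolynomial (Fin n) K) f
  have hq0 : q ≠ 0 := nonZeroDivisors.ne_zero hq
  have hpq : ∀ c : K, p - MvPolynomial.C c * q ≠ 0 := by
    intro c h
    apply hf
    refine ⟨c, ?_⟩
    rw [sub_eq_zero] at h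
    rw [h, map_mul, mul_div_assoc, div_self, mul_one]
    · rw [IsScalarTower.algebraMap_apply K (MvPolynomial (Fin n) K)]
      rfl
    · exact IsFractionRing.to_map_ne_zero_of_mem_nonZeroDivisors hq
  let d := ∑ i : Fin n, (p.degreeOf i + q.degreeOf i) + 1
  have hdp : ∀ i, p.degreeOf i + q.degreeOf i < d := fun i =>
    Nat.lt_succ_of_le (Finset.single_le_sum (f := fun i => p.degreeOf i + q.degreeOf i)
      (fun _ _ => Nat.zero_le _) (Finset.mem_univ i))
  let φ₀ : MvPolynomial (Fin n) K →ₐ[K] Polynomial K :=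
    MvPolynomial.aeval (fun i : Fin n => (Polynomial.X : Polynomial K) ^ (d ^ (i : ℕ)))
  let φ : MvPolynomial (Fin n) K →ₐ[K] RatFunc K :=
    (IsScalarTower.toAlgHom K (Polynomial K) (RatFunc K)).comp φ₀
  have hφ : ∀ r, φ₀ r ≠ 0 → φ r ≠ 0 := fun r hr =>
    RatFunc.algebraMap_ne_zero hr
  have hφq : φ q ≠ 0 := hφ q (kron_ne_zero d q hq0 fun i => by have := hdp i; omega)
  have hφpq : ∀ c : K, φ (p - MvPolynomial.C c * q) ≠ 0 := fun c =>
    hφ _ (kron_ne_zero d _ (hpq c) fun i => by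
      have h1 := MvPolynomial.degreeOf_sub_le i p (MvPolynomial.C c * q)
      have h2 := MvPolynomial.degreeOf_C_mul_le q i c
      have := hdp i
      omega)
  let M : Submonoid (MvPolynomial (Fin n) K) := (nonZeroDivisors (RatFunc K)).comap φ
  have hM : M ≤ nonZeroDivisors (MvPolynomial (Fin n) K) := by
    intro s hs
    rw [mem_nonZeroDivisors_iff_ne_zero]
    rintro rfl
    have : φ 0 ≠ 0 := nonZeroDivisors.ne_zero hs
    simp at this
  let O₀ := Localization.subalgebra.ofField (FractionRing (MvPolynomial (Fin n) K)) M hM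
  have hIC : IsIntegrallyClosed O₀ := isIntegrallyClosed_of_isLocalization O₀ M hM
  have hu : ∀ y : M, IsUnit (φ y) := fun y =>
    isUnit_iff_ne_zero.mpr (nonZeroDivisors.ne_zero y.2)
  let ψ₀ : O₀ →ₐ[K] RatFunc K := IsLocalization.liftAlgHom (M := M) (f := φ) hu
  have hψ₀ : ∀ r, ψ₀ (algebraMap _ O₀ r) = φ r := fun r =>
    IsLocalization.lift_eq (M := M) (g := (φ : MvPolynomial (Fin n) K →+* RatFunc K)) hu r
  have hqM : q ∈ M := mem_nonZeroDivisors_of_ne_zero hφq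
  have hfO : algebraMap _ (FractionRing (MvPolynomial (Fin n) K)) p / algebraMap _ _ q ∈ O₀ :=
    ⟨p, q, hqM, div_eq_mul_inv _ _⟩
  refine ⟨O₀.restrictScalars K, ψ₀, ?_, hfO, ?_⟩
  · intro y hy
    have hfr : IsFractionRing O₀ (FractionRing (MvPolynomial (Fin n) K)) :=
      Localization.subalgebra.isFractionRing_ofField _ M hM
    have hy2 : IsIntegral O₀ y := hy
    obtain ⟨z, rfl⟩ := (IsIntegrallyClosed.isIntegral_iff (ifr := hfr)).mp hy2
    exact z.2
  · apply RatFunc.transcendental_of_ne_C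
    rintro ⟨c, hc⟩
    apply hφpq c
    have h1 : (⟨_, hfO⟩ : O₀) * algebraMap _ O₀ q = algebraMap _ O₀ p := by
      apply Subtype.ext
      exact div_mul_cancel₀ _ (IsFractionRing.to_map_ne_zero_of_mem_nonZeroDivisors hq)
    have h2 := congrArg ψ₀ h1
    rw [map_mul, hψ₀, hψ₀] at h2
    have hc' : ψ₀ ⟨_, hfO⟩ = RatFunc.C c := hc
    rw [hc'] at h2
    rw [map_sub, map_mul, ← h2]
    have : φ (MvPolynomial.C c) = RatFunc.C c := by
      rw [← MvPolynomial.algebraMap_eq, AlgHom.commutes, RatFunc.algebraMap_eq_C]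
    rw [this, sub_self]

lemma transc_of_nonconst {K : Type*} [Field K] {n : ℕ}
    (f : FractionRing (MvPolynomial (Fin n) K))
    (hf : f ∉ Set.range (algebraMap K (FractionRing (MvPolynomial (Fin n) K)))) :
    Transcendental K f := by
  obtain ⟨O, ψ, -, hfO, ht⟩ := exists_place f hf
  intro ha
  apply ht
  have : IsAlgebraic K (⟨f, hfO⟩ : O) :=
    (isAlgebraic_algHom_iff O.val Subtype.val_injective).mp ha
  exact this.algHom ψ

/-- If `F` is algebraic over `K(f)`, it embeds in `K(t)`. -/
lemma exists_embedding {K : Type*} [Field K] {n : ℕ}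
    (f : FractionRing (MvPolynomial (Fin n) K))
    (hf : f ∉ Set.range (algebraMap K (FractionRing (MvPolynomial (Fin n) K))))
    (F : IntermediateField K (FractionRing (MvPolynomial (Fin n) K))) (hfF : f ∈ F)
    (halg : Algebra.IsAlgebraic (Algebra.adjoin K {(⟨f, hfF⟩ : F)}) F) :
    Nonempty (F →ₐ[K] RatFunc K) := by
  obtain ⟨O, ψ, hint, hfO, ht⟩ := exists_place f hf
  let O' : Subalgebra K F := O.comap F.val
  let ι : O' →ₐ[K] O := (F.val.comp O'.val).codRestrict O (fun x => x.2)
  let ψ' : O' →ₐ[K] RatFunc K := ψ.comp ι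
  have hle : Algebra.adjoin K {(⟨f, hfF⟩ : F)} ≤ O' := by
    rw [Algebra.adjoin_le_iff, Set.singleton_subset_iff]
    exact hfO
  -- every element of `F` has a denominator in `K[f]`
  have key : ∀ a : F, ∃ P : Polynomial K, P ≠ 0 ∧
      Polynomial.aeval (⟨f, hfF⟩ : F) P ∈ O' ∧ Polynomial.aeval (⟨f, hfF⟩ : F) P * a ∈ O' ∧
      Polynomial.aeval (⟨f, hfF⟩ : F) P ≠ 0 := by
    intro a
    obtain ⟨y, hy0, hy⟩ := (halg.isAlgebraic a).exists_integral_multiple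
    obtain ⟨y, hyA⟩ := y
    have hyO := hle hyA
    rw [Algebra.adjoin_singleton_eq_range_aeval] at hyA
    obtain ⟨P, rfl⟩ := hyA
    have hne : Polynomial.aeval (⟨f, hfF⟩ : F) P ≠ 0 := fun h => hy0 (Subtype.ext h)
    refine ⟨P, ?_, hyO, ?_, hne⟩
    · rintro rfl
      exact hne (map_zero _)
    · apply hint
      have hy' : IsIntegral (Algebra.adjoin K {(⟨f, hfF⟩ : F)})
        (Polynomial.aeval (⟨f, hfF⟩ : F) P * a) := hy
      obtain ⟨Q, hQm, hQ⟩ := hy'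
      let j : Algebra.adjoin K {(⟨f, hfF⟩ : F)} →+* O :=
        (ι.comp (Subalgebra.inclusion hle)).toRingHom
      refine ⟨Q.map j, hQm.map j, ?_⟩
      have := congrArg F.val hQ
      rw [map_zero] at this
      rw [← this, Polynomial.eval₂_map]
      exact (Polynomial.hom_eval₂ Q (algebraMap _ F) F.val.toRingHom _).symm
  have hinj : Function.Injective ψ' := by
    rw [injective_iff_map_eq_zero]
    intro a ha
    by_contra hne
    have hne' : (a : F) ≠ 0 := fun h => hne (Subtype.ext h)
    obtain ⟨P, hP0, hPO, hb, -⟩ := key (a : F)⁻¹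
    have h1 : Polynomial.aeval (⟨⟨f, hfF⟩, hfO⟩ : O') P = ⟨_, hb⟩ * a := by
      apply Subtype.ext
      have : O'.val (Polynomial.aeval (⟨⟨f, hfF⟩, hfO⟩ : O') P) =
        Polynomial.aeval (⟨f, hfF⟩ : F) P := by
        rw [← Polynomial.aeval_algHom_apply]
        rfl
      refine this.trans ?_
      exact (inv_mul_cancel_right₀ hne' _).symm
    have h2 := congrArg ψ' h1
    rw [map_mul, ha, mul_zero, ← Polynomial.aeval_algHom_apply] at h2
    exact ht ⟨P, hP0, h2⟩
  have : IsFractionRing O' F := by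
    refine IsFractionRing.of_field O' F fun z => ?_
    obtain ⟨P, -, h1, h2, h3⟩ := key z
    exact ⟨⟨_, h2⟩, ⟨_, h1⟩, (mul_div_cancel_left₀ z h3).symm⟩
  exact ⟨IsFractionRing.liftAlgHom (g := ψ') hinj⟩

/-- Extended Lüroth. -/
lemma exists_generator {K L : Type*} [Field K] [Field L] [Algebra K L]
    (F : IntermediateField K L) (θ : F →ₐ[K] RatFunc K) :
    ∃ h : L, IntermediateField.adjoin K {h} = F := by
  have hE := RatFunc.Luroth.eq_adjoin_generator (E := θ.fieldRange)
  obtain ⟨h₀, hh⟩ := RatFunc.Luroth.generator_mem (E := θ.fieldRange)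
  have hh' : θ h₀ = RatFunc.Luroth.generator θ.fieldRange := hh
  have htop : IntermediateField.adjoin K {h₀} = ⊤ := by
    apply IntermediateField.map_injective θ
    rw [IntermediateField.adjoin_map, Set.image_singleton, hh', ← hE, AlgHom.fieldRange_eq_map]
  refine ⟨h₀, ?_⟩
  have := congrArg (IntermediateField.map F.val) htop
  rw [IntermediateField.adjoin_map, Set.image_singleton, ← AlgHom.fieldRange_eq_map,
    IntermediateField.fieldRange_val] at this
  exact this

lemma ratEval_mem {K L : Type*} [Field K] [Field L] [Algebra K L] (g : RatFunc K) (h : L) :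
    ratEval g h ∈ IntermediateField.adjoin K {h} :=
  (IntermediateField.mem_adjoin_simple_iff K _).mpr ⟨_, _, rfl⟩

lemma exists_ratEval {K L : Type*} [Field K] [Field L] [Algebra K L] (h : L)
    (ht : Transcendental K h) {f : L} (hf : f ∈ IntermediateField.adjoin K {h}) :
    ∃ g : RatFunc K, f = ratEval g h := by
  obtain ⟨g, hg⟩ := (RatFunc.algEquivOfTranscendental h ht).surjective ⟨f, hf⟩
  refine ⟨g, ?_⟩
  rw [ratEval, ← RatFunc.algEquivOfTranscendental_apply h ht, hg]

lemma trDegOne_adjoin {K L : Type*} [Field K] [Field L] [Algebra K L] (h : L)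
    (ht : Transcendental K h) : TrDegOne K (IntermediateField.adjoin K {h}) := by
  have h1 := IsTranscendenceBasis.polynomial Unit K
  have : Algebra.IsAlgebraic (Polynomial K) (RatFunc K) :=
    IsLocalization.isAlgebraic _ (nonZeroDivisors (Polynomial K))
  have h2 := h1.algebraMap_comp (A := RatFunc K)
  exact ⟨_, (RatFunc.algEquivOfTranscendental h ht).isTranscendenceBasis h2⟩

lemma nonconst_of_ratEval {K L : Type*} [Field K] [Field L] [Algebra K L] (g : RatFunc K) (h : L)
    (hg : ratEval g h ∉ Set.range (algebraMap K L)) : h ∉ Set.range (algebraMap K L) := by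
  rintro ⟨c, rfl⟩
  apply hg
  refine ⟨ratEval g c, ?_⟩
  simp [ratEval, Polynomial.aeval_algebraMap_apply]

lemma adjoin_eq_iff {K L : Type*} [Field K] [Field L] [Algebra K L] (h' : L)
    (ht : Transcendental K h') (l : RatFunc K) :
    IntermediateField.adjoin K {ratEval l h'} = IntermediateField.adjoin K {h'} ↔
      max l.num.natDegree l.denom.natDegree = 1 := by
  rw [← RatFunc.finrank_eq_max_natDegree, IntermediateField.finrank_eq_one_iff_eq_top]
  let e := RatFunc.algEquivOfTranscendental h' ht
  let θ : RatFunc K →ₐ[K] L := (IntermediateField.adjoin K {h'}).val.comp e.toAlgHom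
  rw [← (IntermediateField.map_injective θ).eq_iff, IntermediateField.adjoin_map,
    Set.image_singleton]
  have h1 : θ l = ratEval l h' := RatFunc.algEquivOfTranscendental_apply h' ht l
  have h2 : IntermediateField.map θ ⊤ = IntermediateField.adjoin K {h'} := by
    rw [← RatFunc.adjoin_X, IntermediateField.adjoin_map, Set.image_singleton]
    have : θ RatFunc.X = h' := RatFunc.algEquivOfTranscendental_X h' ht
    rw [this]
  rw [h1, h2]

/-- For non-constant `f ∈ K(x₁,…,xₙ)`, the map `[(g,h)] ↦ K(h)` is a
bijection between equivalence classes of uni-multivariate decompositions of `f` and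
the intermediate fields `K(f) ⊆ F ⊆ K(x₁,…,xₙ)` of transcendence degree 1 over `K`:
(a) every decomposition `(g,h)` yields such an intermediate field `K(h)`;
(b) the map is surjective onto these fields;
(c) two decompositions map to the same field iff they are equivalent. -/
theorem decompositions_biject_with_intermediate_fields
    {K : Type*} [Field K] {n : ℕ}
    (f : FractionRing (MvPolynomial (Fin n) K))
    (hf : f ∉ Set.range (algebraMap K (FractionRing (MvPolynomial (Fin n) K)))) :
    (∀ (g : RatFunc K) (h : FractionRing (MvPolynomial (Fin n) K)), f = ratEval g h →
        IntermediateField.adjoin K {f} ≤ IntermediateField.adjoin K {h} ∧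
        TrDegOne K (IntermediateField.adjoin K {h})) ∧
    (∀ F : IntermediateField K (FractionRing (MvPolynomial (Fin n) K)),
        IntermediateField.adjoin K {f} ≤ F → TrDegOne K F →
        ∃ (g : RatFunc K) (h : FractionRing (MvPolynomial (Fin n) K)),
          f = ratEval g h ∧ IntermediateField.adjoin K {h} = F) ∧
    (∀ (g g' : RatFunc K) (h h' : FractionRing (MvPolynomial (Fin n) K)),
        f = ratEval g h → f = ratEval g' h' →
        (IntermediateField.adjoin K {h} = IntermediateField.adjoin K {h'} ↔
          ∃ l : RatFunc K, max l.num.natDegree l.denom.natDegree = 1 ∧ h = ratEval l h')) := by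
  have tr : ∀ (g : RatFunc K) (h : FractionRing (MvPolynomial (Fin n) K)), f = ratEval g h →
      Transcendental K h := fun g h e =>
    transc_of_nonconst h (nonconst_of_ratEval g h (e ▸ hf))
  refine ⟨?_, ?_, ?_⟩
  · intro g h e
    refine ⟨?_, trDegOne_adjoin h (tr g h e)⟩
    rw [IntermediateField.adjoin_simple_le_iff, e]
    exact ratEval_mem g h
  · intro F hF hT
    have hfF : f ∈ F := IntermediateField.adjoin_simple_le_iff.mp hF
    have hft := transc_of_nonconst f hf
    have hft' : Transcendental K (⟨f, hfF⟩ : F) := fun ha => hft (ha.algHom F.val)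
    have halg : Algebra.IsAlgebraic (Algebra.adjoin K {(⟨f, hfF⟩ : F)}) F := by
      obtain ⟨t, hb⟩ := hT
      have hind : AlgebraicIndependent K (fun _ : Unit => (⟨f, hfF⟩ : F)) :=
        algebraicIndependent_unique_type_iff.mpr hft'
      have hb' := hind.isTranscendenceBasis_of_lift_trdeg_le_of_finite
        (le_of_eq hb.lift_cardinalMk_eq_trdeg.symm)
      have := hb'.isAlgebraic
      rwa [Set.range_const] at this
    obtain ⟨θ⟩ := exists_embedding f hf F hfF halg
    obtain ⟨h, rfl⟩ := exists_generator F θ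
    have hh : Transcendental K h := by
      apply transc_of_nonconst
      rintro ⟨c, rfl⟩
      apply hf
      have : IntermediateField.adjoin K
        {algebraMap K (FractionRing (MvPolynomial (Fin n) K)) c} = ⊥ :=
        IntermediateField.adjoin_simple_eq_bot_iff.mpr ⟨c, rfl⟩
      rw [this] at hfF
      exact hfF
    obtain ⟨g, hg⟩ := exists_ratEval h hh hfF
    exact ⟨g, h, hg, rfl⟩
  · intro g g' h h' e e'
    have ht' := tr g' h' e'
    constructor
    · intro heq
      have hm : h ∈ IntermediateField.adjoin K {h'} :=
        heq ▸ IntermediateField.mem_adjoin_simple_self K h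
      obtain ⟨l, rfl⟩ := exists_ratEval h' ht' hm
      exact ⟨l, (adjoin_eq_iff h' ht' l).mp heq, rfl⟩
    · rintro ⟨l, hl, rfl⟩
      exact (adjoin_eq_iff h' ht' l).mpr hl
end

section
/- (Extended Lüroth Theorem) Let K ⊆ F ⊆ K(x₁,…,xₙ) be an intermediate field with transcendence degree of F over K equal to 1. Then there exists a single rational function f ∈ K(x₁,…,xₙ) such that F = K(f). -/
open MvPolynomial

namespace ExtLuroth

theorem generated_of_embedding {K M : Type*} [Field K] [Field M] [Algebra K M]
    (F : IntermediateField K M) (ρ : F →ₐ[K] RatFunc K) :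
    ∃ f : M, F = IntermediateField.adjoin K {f} := by
  have h := RatFunc.Luroth.eq_adjoin_generator (E := ρ.fieldRange)
  have hg : RatFunc.Luroth.generator ρ.fieldRange ∈ ρ.fieldRange := RatFunc.Luroth.generator_mem
  obtain ⟨f, hf⟩ := hg
  replace hf : ρ f = RatFunc.Luroth.generator ρ.fieldRange := hf
  have h2 : (⊤ : IntermediateField K F) = IntermediateField.adjoin K {f} := by
    apply IntermediateField.map_injective ρ
    rw [IntermediateField.adjoin_map, Set.image_singleton, hf, ← h,
      AlgHom.fieldRange_eq_map]
  refine ⟨f, ?_⟩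
  have h3 := congrArg (IntermediateField.map F.val) h2
  rw [IntermediateField.adjoin_map, Set.image_singleton, ← AlgHom.fieldRange_eq_map,
    IntermediateField.fieldRange_val] at h3
  exact h3

theorem place_embedding {K F E : Type*} [Field K] [Field F] [Field E] [Algebra K F] [Algebra K E]
    (B : Subalgebra K F) (ψ : B →ₐ[K] E)
    (hval : ∀ x : F, x ∈ B ∨ ∃ h : x⁻¹ ∈ B, ψ ⟨x⁻¹, h⟩ = 0)
    (t : F) (hb : IsTranscendenceBasis K (fun _ : Unit => t)) (ht : t ∈ B)
    (htr : Transcendental K (ψ ⟨t, ht⟩)) : Nonempty (F →ₐ[K] E) := by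
  have hB : B = ⊤ := by
    rw [eq_top_iff]
    rintro x -
    by_contra hx
    obtain ⟨h, h0⟩ := (hval x).resolve_left hx
    have hx0 : x ≠ 0 := by rintro rfl; exact hx B.zero_mem
    have := hb.isAlgebraic
    rw [Set.range_const] at this
    obtain ⟨q, hq, hq0⟩ := (this.isAlgebraic x⁻¹).exists_nonzero_coeff_and_aeval_eq_zero
      (mem_nonZeroDivisors_of_ne_zero (inv_ne_zero hx0))
    have hle : Algebra.adjoin K {t} ≤ B := Algebra.adjoin_le (by simpa using ht)
    -- lift everything to `B`
    let ι := Subalgebra.inclusion hle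
    let q' : Polynomial B := q.map ι.toRingHom
    have e1 : Polynomial.eval (⟨x⁻¹, h⟩ : B) q' = 0 := by
      apply Subtype.val_injective
      have : B.val.toRingHom (Polynomial.eval (⟨x⁻¹, h⟩ : B) q') = 0 := by
        rw [Polynomial.eval_map, Polynomial.hom_eval₂, ← hq0, Polynomial.aeval_def]
        rfl
      exact this
    have e2 := congrArg ψ e1
    rw [← Polynomial.divX_mul_X_add q'] at e2
    simp only [Polynomial.eval_add, Polynomial.eval_mul, Polynomial.eval_X, Polynomial.eval_C,
      map_add, map_mul, h0, mul_zero, zero_add, map_zero] at e2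
    obtain ⟨u, hu⟩ : ∃ u : Polynomial K, Polynomial.aeval t u = (q.coeff 0 : F) := by
      have h5 : ∀ z ∈ Algebra.adjoin K {t}, ∃ u : Polynomial K, Polynomial.aeval t u = z := by
        intro z hz
        rw [Algebra.adjoin_singleton_eq_range_aeval] at hz
        exact hz
      exact h5 _ (q.coeff 0).2
    have hu' : q'.coeff 0 = Polynomial.aeval (⟨t, ht⟩ : B) u := by
      apply Subtype.val_injective
      rw [Polynomial.coeff_map]
      change (q.coeff 0 : F) = B.val _
      rw [← Polynomial.aeval_algHom_apply, ← hu]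
      rfl
    rw [hu', ← Polynomial.aeval_algHom_apply] at e2
    have hu0 : u = 0 := by
      by_contra hne
      exact htr ⟨u, hne, e2⟩
    rw [hu0, map_zero] at hu
    exact hq (Subtype.val_injective hu.symm)
  subst hB
  exact ⟨ψ.comp Subalgebra.topEquiv.symm.toAlgHom⟩

open HahnSeries in
theorem hahn_coeff_mul {Γ E : Type*} [AddCommGroup Γ] [LinearOrder Γ] [IsOrderedAddMonoid Γ]
    [Field E] {x y : HahnSeries Γ E} (hx : 0 ≤ x.orderTop) (hy : 0 ≤ y.orderTop) :
    (x * y).coeff 0 = x.coeff 0 * y.coeff 0 := by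
  rw [HahnSeries.coeff_mul]
  have hx' : ∀ i < 0, x.coeff i = 0 := fun i hi =>
    coeff_eq_zero_of_lt_orderTop (lt_of_lt_of_le (by exact_mod_cast hi) hx)
  have hy' : ∀ i < 0, y.coeff i = 0 := fun i hi =>
    coeff_eq_zero_of_lt_orderTop (lt_of_lt_of_le (by exact_mod_cast hi) hy)
  rw [Finset.sum_eq_single (0, 0)]
  · rintro ⟨i, j⟩ hij hne
    simp only [Finset.mem_antidiagonal] at hij
    rcases lt_trichotomy i 0 with h | h | h
    · simp [hx' i h]
    · exfalso; apply hne; subst h; simpa using hij.2.2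
    · have : j < 0 := by
        have h2 := hij
        simp at h2
        have h3 : j = -i := by grind
        rw [h3]; simpa using h
      simp [hy' j this]
  · intro h
    simp only [Finset.mem_antidiagonal, mem_support, not_and] at h
    by_contra hne
    simp at hne
    simp_all

/-- The valuation ring of Hahn series of nonnegative order. -/
noncomputable def hahnRing (K Γ E : Type*) [AddCommGroup Γ] [LinearOrder Γ] [IsOrderedAddMonoid Γ]
    [Field K] [Field E] [Algebra K E] : Subalgebra K (HahnSeries Γ E) where
  carrier := {x | 0 ≤ x.orderTop}
  mul_mem' := by
    intro a b ha hb
    simp only [Set.mem_ofPred_eq, HahnSeries.orderTop_mul] at *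
    exact add_nonneg ha hb
  add_mem' := by
    intro a b ha hb
    exact le_trans (le_inf ha hb) HahnSeries.min_orderTop_le_orderTop_add
  algebraMap_mem' := by
    intro r
    simp only [Set.mem_ofPred_eq, HahnSeries.algebraMap_apply]
    exact HahnSeries.orderTop_single_le

/-- The constant coefficient. -/
noncomputable def hahnPlace (K Γ E : Type*) [AddCommGroup Γ] [LinearOrder Γ] [IsOrderedAddMonoid Γ]
    [Field K] [Field E] [Algebra K E] : hahnRing K Γ E →ₐ[K] E where
  toFun x := x.1.coeff 0
  map_one' := by simp
  map_mul' x y := hahn_coeff_mul x.2 y.2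
  map_zero' := by simp
  map_add' x y := by simp
  commutes' r := by simp [HahnSeries.algebraMap_apply]

theorem mem_hahnRing {K Γ E : Type*} [AddCommGroup Γ] [LinearOrder Γ] [IsOrderedAddMonoid Γ]
    [Field K] [Field E] [Algebra K E] {x : HahnSeries Γ E} :
    x ∈ hahnRing K Γ E ↔ 0 ≤ x.orderTop := Iff.rfl

theorem hahnPlace_apply {K Γ E : Type*} [AddCommGroup Γ] [LinearOrder Γ] [IsOrderedAddMonoid Γ]
    [Field K] [Field E] [Algebra K E] (x : hahnRing K Γ E) :
    hahnPlace K Γ E x = x.1.coeff 0 := rfl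

theorem hahn_val (K Γ E : Type*) [AddCommGroup Γ] [LinearOrder Γ] [IsOrderedAddMonoid Γ]
    [Field K] [Field E] [Algebra K E] (x : HahnSeries Γ E) :
    x ∈ hahnRing K Γ E ∨ ∃ h : x⁻¹ ∈ hahnRing K Γ E, hahnPlace K Γ E ⟨x⁻¹, h⟩ = 0 := by
  by_cases hx : 0 ≤ x.orderTop
  · exact Or.inl hx
  right
  push Not at hx
  have hx0 : x ≠ 0 := by rintro rfl; simp at hx
  have h1 : x.orderTop + x⁻¹.orderTop = 0 := by
    rw [← HahnSeries.orderTop_mul, mul_inv_cancel₀ hx0, HahnSeries.orderTop_one]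
  have hpos : 0 < x⁻¹.orderTop := by
    by_contra h
    push Not at h
    have : x.orderTop + x⁻¹.orderTop < 0 := by
      calc x.orderTop + x⁻¹.orderTop ≤ x.orderTop + 0 := by gcongr
        _ < 0 := by simpa using hx
    exact this.ne h1
  exact ⟨hpos.le, HahnSeries.coeff_eq_zero_of_lt_orderTop hpos⟩

/-- The value group. -/
abbrev Gam (n : ℕ) := Lex (Fin n → ℤ)

theorem hahn_indep (n : ℕ) (E : Type*) [Field E] : AlgebraicIndependent E
    (fun i : Fin n => (HahnSeries.single (toLex (Pi.single i 1) : Gam n) (1 : E))) := by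
  let e : (Fin n →₀ ℕ) → Gam n := fun m => toLex (fun i => (m i : ℤ))
  have he : Function.Injective e := by
    intro a b h
    ext i
    have := congrFun (toLex.injective h) i
    exact_mod_cast this
  rw [algebraicIndependent_iff]
  intro p hp
  ext m
  rw [coeff_zero]
  have h1 : (aeval (fun i : Fin n => (HahnSeries.single (toLex (Pi.single i 1) : Gam n) (1 : E)))) p
      = ∑ m ∈ p.support, HahnSeries.single (e m) (p.coeff m) := by
    conv_lhs => rw [p.as_sum]
    rw [map_sum]
    refine Finset.sum_congr rfl fun m _ => ?_
    rw [aeval_monomial, Finsupp.prod_fintype _ _ (by simp)]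
    have : ∀ s : Finset (Fin n), ∏ i ∈ s, (HahnSeries.single (toLex (Pi.single i 1) : Gam n) (1 : E)) ^ m i
      = HahnSeries.single (∑ i ∈ s, m i • (toLex (Pi.single i 1) : Gam n)) 1 := by
      intro s
      induction s using Finset.induction_on with
      | empty => simp
      | insert a s ha ih =>
        rw [Finset.prod_insert ha, Finset.sum_insert ha, ih, HahnSeries.single_pow,
          HahnSeries.single_mul_single]
        simp
    rw [this, HahnSeries.algebraMap_apply, HahnSeries.C_apply, HahnSeries.single_mul_single]
    simp only [zero_add, mul_one, Algebra.algebraMap_self, RingHom.id_apply]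
    congr 2
    apply ofLex.injective
    funext j
    change (ofLex (∑ i, m i • (toLex (Pi.single i 1) : Gam n))) j = _
    have h3 : (ofLex (∑ i, m i • (toLex (Pi.single i 1) : Gam n))) =
      ∑ i, m i • (Pi.single i 1 : Fin n → ℤ) := rfl
    rw [h3, Finset.sum_apply]
    simp [Pi.single_apply, e]
  rw [h1] at hp
  have h2 := congrArg (fun x => HahnSeries.coeff x (e m)) hp
  simp only [HahnSeries.coeff_sum, HahnSeries.coeff_zero] at h2
  rw [Finset.sum_eq_single m] at h2
  · simpa using h2
  · intro b _ hb
    exact HahnSeries.coeff_single_of_ne (fun h => hb (he h).symm)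
  · intro h
    simp only [mem_support_iff, not_not] at h
    simp [h]

theorem shift_injective {K E : Type*} [Field K] [Field E] [Algebra K E] {n : ℕ} (a : Fin n → E) :
    Function.Injective (aeval (R := K) (fun i : Fin n =>
      HahnSeries.single (toLex (Pi.single i 1) : Gam n) (1 : E) + algebraMap E _ (a i))) := by
  let T : MvPolynomial (Fin n) K →ₐ[K] MvPolynomial (Fin n) E := aeval (fun i => X i + C (a i))
  have hT : Function.Injective T := by
    have h : ((aeval (R := E) (fun i : Fin n => (X i - C (a i) : MvPolynomial (Fin n) E))).restrictScalars K).comp T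
        = mapAlgHom (Algebra.ofId K E) := by
      ext i : 1
      simp [T]
    have h2 : Function.Injective (mapAlgHom (σ := Fin n) (Algebra.ofId K E)) :=
      map_injective _ (algebraMap K E).injective
    rw [← h] at h2
    rw [AlgHom.coe_comp] at h2
    exact Function.Injective.of_comp h2
  have h : (aeval (R := K) (fun i : Fin n =>
      HahnSeries.single (toLex (Pi.single i 1) : Gam n) (1 : E) + algebraMap E _ (a i))) =
      ((aeval (R := E) (fun i : Fin n =>
        (HahnSeries.single (toLex (Pi.single i 1) : Gam n) (1 : E)))).restrictScalars K).comp T := by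
    ext i : 1
    simp [T]
  rw [h, AlgHom.coe_comp]
  exact Function.Injective.comp (hahn_indep n E) hT

theorem kronecker {K : Type*} [Field K] {n N : ℕ} (hN : 1 < N) (p : MvPolynomial (Fin n) K)
    (hp : p.totalDegree < N)
    (h0 : aeval (fun i : Fin n => (Polynomial.X : Polynomial K) ^ (N ^ (i : ℕ))) p = 0) : p = 0 := by
  let w : (Fin n →₀ ℕ) → ℕ := fun m => ∑ i, m i * N ^ (i : ℕ)
  have hw : ∀ a ∈ p.support, ∀ b ∈ p.support, w a = w b → a = b := by
    intro a ha b hb h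
    have key : ∀ c ∈ p.support, ∀ i, c i < N := fun c hc i =>
      lt_of_le_of_lt ((Finsupp.le_degree i c).trans (le_totalDegree hc)) hp
    refine Finsupp.ext <| congrFun <| List.ofFn_inj.mp ?_
    apply Nat.ofDigits_inj_of_len_eq hN (by simp)
    · simpa [List.mem_ofFn] using key a ha
    · simpa [List.mem_ofFn] using key b hb
    simpa only [Nat.ofDigits_eq_sum_mapIdx, List.mapIdx_eq_ofFn, List.get_ofFn, List.length_ofFn,
      Fin.val_cast, List.sum_ofFn] using! h
  have h1 : aeval (fun i : Fin n => (Polynomial.X : Polynomial K) ^ (N ^ (i : ℕ))) p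
      = ∑ m ∈ p.support, Polynomial.monomial (w m) (p.coeff m) := by
    conv_lhs => rw [p.as_sum]
    rw [map_sum]
    refine Finset.sum_congr rfl fun m _ => ?_
    rw [aeval_monomial, Finsupp.prod_fintype _ _ (by simp), ← Polynomial.C_mul_X_pow_eq_monomial]
    simp only [← pow_mul, Finset.prod_pow_eq_pow_sum, w, mul_comm]
    rfl
  rw [h1] at h0
  by_contra hne
  obtain ⟨m, hm⟩ := support_nonempty.mpr hne
  have h2 := congrArg (fun x => Polynomial.coeff x (w m)) h0
  simp only [Polynomial.finsetSum_coeff, Polynomial.coeff_zero, Polynomial.coeff_monomial] at h2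
  rw [Finset.sum_eq_single m] at h2
  · simp at h2; exact (mem_support_iff.mp hm) h2
  · intro b hb hbm
    rw [if_neg (fun h => hbm (hw b hb m hm h))]
  · exact fun h => absurd hm h

end ExtLuroth

open ExtLuroth

/-- Extended Lüroth Theorem: every intermediate field
`K ⊆ F ⊆ K(x₁,…,xₙ)` of transcendence degree 1 over `K` is generated by a single
rational function: `F = K(f)` for some `f ∈ K(x₁,…,xₙ)`. -/
theorem extended_luroth
    {K : Type*} [Field K] {n : ℕ}
    (F : IntermediateField K (FractionRing (MvPolynomial (Fin n) K)))
    (hF : TrDegOne K F) :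
    ∃ f : FractionRing (MvPolynomial (Fin n) K),
      F = IntermediateField.adjoin K {f} := by
  obtain ⟨t, hb⟩ := hF
  have httr : Transcendental K (t : FractionRing (MvPolynomial (Fin n) K)) := by
    have : Transcendental K t := by
      simpa using (hb.1.transcendental ())
    exact (transcendental_algebraMap_iff (FaithfulSMul.algebraMap_injective F _)).mpr this
  obtain ⟨p, q, hq, hpq⟩ := IsFractionRing.div_surjective (A := MvPolynomial (Fin n) K)
    (t : FractionRing (MvPolynomial (Fin n) K))
  have hq0 : q ≠ 0 := nonZeroDivisors.ne_zero hq
  let N := max p.totalDegree q.totalDegree + 2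
  let a : Fin n → RatFunc K := fun i => RatFunc.X ^ (N ^ (i : ℕ))
  have hkr : ∀ r : MvPolynomial (Fin n) K, r.totalDegree < N → aeval a r = 0 → r = 0 := by
    intro r hr h
    refine kronecker (by omega) r hr ?_
    apply RatFunc.algebraMap_injective K
    rw [map_zero, ← h]
    have : (IsScalarTower.toAlgHom K (Polynomial K) (RatFunc K)).comp
      (aeval (fun i : Fin n => (Polynomial.X : Polynomial K) ^ (N ^ (i : ℕ)))) = aeval a := by
      ext i : 1
      simp [a]
    rw [← this]
    rfl
  have hQ : aeval a q ≠ 0 := fun h => hq0 (hkr q (by omega) h)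
  have hτ : Transcendental K (aeval a p / aeval a q) := by
    apply RatFunc.transcendental_of_ne_C
    rintro ⟨c, hc⟩
    rw [div_eq_iff hQ] at hc
    have h1 : p - C c * q = 0 := by
      apply hkr
      · refine lt_of_le_of_lt (totalDegree_sub _ _) ?_
        have := totalDegree_mul (C c) q
        rw [totalDegree_C] at this
        omega
      · rw [map_sub, map_mul, aeval_C, hc, RatFunc.algebraMap_eq_C, sub_self]
    rw [sub_eq_zero] at h1
    apply httr
    have hne : algebraMap (MvPolynomial (Fin n) K) (FractionRing (MvPolynomial (Fin n) K)) q ≠ 0 := by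
      simpa using hq0
    rw [← hpq, h1, map_mul, mul_div_cancel_right₀ _ hne, ← MvPolynomial.algebraMap_eq,
      ← IsScalarTower.algebraMap_apply]
    exact isAlgebraic_algebraMap c
  let j := aeval (R := K) (fun i : Fin n =>
      HahnSeries.single (toLex (Pi.single i 1) : Gam n) (1 : RatFunc K) + algebraMap (RatFunc K) _ (a i))
  have hj : Function.Injective j := shift_injective a
  let J : FractionRing (MvPolynomial (Fin n) K) →ₐ[K] HahnSeries (Gam n) (RatFunc K) :=
    IsFractionRing.liftAlgHom hj
  have hJ : ∀ r, J (algebraMap _ _ r) = j r := fun r => IsFractionRing.lift_algebraMap hj r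
  let A := hahnRing K (Gam n) (RatFunc K)
  let π := hahnPlace K (Gam n) (RatFunc K)
  have hpos : ∀ i : Fin n, (0 : Gam n) < toLex (Pi.single i 1) := by
    intro i
    refine ⟨i, ?_, ?_⟩
    · intro k hk
      simp [Pi.single_eq_of_ne hk.ne]
      rfl
    · simp
      exact zero_lt_one
  have hsA : ∀ i, HahnSeries.single (toLex (Pi.single i 1) : Gam n) (1 : RatFunc K)
      + algebraMap (RatFunc K) _ (a i) ∈ A := by
    intro i
    refine A.add_mem ?_ ?_
    · rw [mem_hahnRing]
      refine le_trans ?_ HahnSeries.orderTop_single_le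
      exact_mod_cast (hpos i).le
    · rw [mem_hahnRing]
      exact HahnSeries.orderTop_single_le
  let jA : MvPolynomial (Fin n) K →ₐ[K] A := aeval (fun i => ⟨_, hsA i⟩)
  have hjA : ∀ r, (jA r : HahnSeries (Gam n) (RatFunc K)) = j r := by
    have : A.val.comp jA = j := by
      ext i : 1
      simp [jA, j]
    intro r
    rw [← this]; rfl
  have hπ : ∀ r, π (jA r) = aeval a r := by
    have : π.comp jA = aeval a := by
      ext i : 1
      simp only [jA, AlgHom.comp_apply, aeval_X]
      rw [hahnPlace_apply, HahnSeries.coeff_add, HahnSeries.coeff_single_of_ne (hpos i).ne,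
        HahnSeries.algebraMap_apply]
      simp
    intro r
    rw [← this]; rfl
  have hjq : j q ≠ 0 := (map_ne_zero_iff j hj).mpr hq0
  have hJt : J (t : FractionRing (MvPolynomial (Fin n) K)) * j q = j p := by
    rw [← hpq, map_div₀, hJ, hJ, div_mul_cancel₀ _ hjq]
  have htA : J (t : FractionRing (MvPolynomial (Fin n) K)) ∈ A := by
    by_contra h
    obtain ⟨h1, h2⟩ := (hahn_val K (Gam n) (RatFunc K) _).resolve_left h
    apply hQ
    have h0 : J (t : FractionRing (MvPolynomial (Fin n) K)) ≠ 0 := by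
      intro h0; exact h (h0 ▸ A.zero_mem)
    have h3 : jA q = ⟨_, h1⟩ * jA p := by
      apply Subtype.val_injective
      change (jA q : HahnSeries (Gam n) (RatFunc K)) = _ * (jA p : HahnSeries (Gam n) (RatFunc K))
      rw [hjA, hjA, ← hJt, inv_mul_cancel_left₀ h0]
    rw [← hπ, h3, map_mul]
    change hahnPlace K (Gam n) (RatFunc K) _ * _ = 0
    rw [h2, zero_mul]
  have hπt : π ⟨_, htA⟩ = aeval a p / aeval a q := by
    rw [eq_div_iff hQ, ← hπ, ← hπ, ← map_mul]
    congr 1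
    apply Subtype.val_injective
    change _ * (jA q : HahnSeries (Gam n) (RatFunc K)) = (jA p : HahnSeries (Gam n) (RatFunc K))
    rw [hjA, hjA, hJt]
  let JF : F →ₐ[K] HahnSeries (Gam n) (RatFunc K) := J.comp F.val
  let B : Subalgebra K F := A.comap JF
  let ψ : B →ₐ[K] RatFunc K := π.comp ((JF.comp B.val).codRestrict A (fun x => x.2))
  obtain ⟨ρ⟩ := place_embedding B ψ (by
    intro x
    rcases hahn_val K (Gam n) (RatFunc K) (JF x) with h | ⟨h, h0⟩
    · exact Or.inl h
    · refine Or.inr ⟨?_, ?_⟩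
      · change JF x⁻¹ ∈ A
        rw [map_inv₀]; exact h
      · rw [← h0]
        rw [hahnPlace_apply]
        exact congrArg (fun z => HahnSeries.coeff z 0) (map_inv₀ JF x)) t hb htA (by
    have : ψ ⟨t, htA⟩ = π ⟨_, htA⟩ := rfl
    rw [this, hπt]
    exact hτ)
  exact generated_of_embedding F ρ
end

section
/- Let K ⊆ F ⊆ K(x₁,…,xₙ) with tr.deg(F/K) = 1. If F contains a non-constant polynomial p ∈ K[x₁,…,xₙ], then F is generated over K by a polynomial: there exists q ∈ K[x₁,…,xₙ] with F = K(q). -/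
open MvPolynomial

lemma kron {K : Type*} [Field K] {n : ℕ} (p : MvPolynomial (Fin n) K) (hp : 0 < p.totalDegree) :
    ∃ ψ : MvPolynomial (Fin n) K →ₐ[K] Polynomial K, 0 < (ψ p).natDegree := by
  classical
  set N := 2 + p.totalDegree with hN
  set e : (Fin n →₀ ℕ) → ℕ := fun v => ∑ i : Fin n, N ^ (i : ℕ) * v i with he
  have hinj : ∀ v ∈ p.support, ∀ w ∈ p.support, e v = e w → v = w := by
    have lt : ∀ v ∈ p.support, ∀ i, v i < N := fun v hv i =>
      lt_of_le_of_lt ((monomial_le_degreeOf i hv).trans (degreeOf_le_totalDegree p i)) (by lia)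
    intro v hv w hw h
    refine Finsupp.ext <| congrFun <| List.ofFn_inj.mp ?_
    have h1 := lt v hv
    have h2 := lt w hw
    apply Nat.ofDigits_inj_of_len_eq (Nat.lt_add_right p.totalDegree one_lt_two)
      (by simp) (by grind) (by grind)
    simpa only [Nat.ofDigits_eq_sum_mapIdx, List.mapIdx_eq_ofFn, List.get_ofFn, List.length_ofFn,
      Fin.val_cast, mul_comm, List.sum_ofFn] using! h
  let ψ : MvPolynomial (Fin n) K →ₐ[K] Polynomial K := aeval (fun i => Polynomial.X ^ (N ^ (i : ℕ)))
  have hψ : ψ p = ∑ v ∈ p.support, Polynomial.monomial (e v) (coeff v p) := by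
    simp only [ψ, aeval_def, eval₂_eq']
    refine Finset.sum_congr rfl fun v _ => ?_
    simp only [← pow_mul, Finset.prod_pow_eq_pow_sum, he, ← Polynomial.C_mul_X_pow_eq_monomial]
    rfl
  obtain ⟨v, hv, hv0⟩ : ∃ v ∈ p.support, v ≠ 0 := by
    by_contra! h
    have : p.totalDegree = 0 := by
      rw [totalDegree_eq_zero_iff]
      intro m hm i
      simp [h m hm]
    omega
  refine ⟨ψ, ?_⟩
  have hc : (ψ p).coeff (e v) ≠ 0 := by
    rw [hψ, Polynomial.finsetSum_coeff, Finset.sum_eq_single v]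
    · simpa using hv
    · intro w hw hne
      rw [Polynomial.coeff_monomial, if_neg]
      exact fun h => hne (hinj w hw v hv h)
    · exact fun h => absurd hv h
  refine lt_of_lt_of_le ?_ (Polynomial.le_natDegree_of_ne_zero hc)
  obtain ⟨i, hi⟩ := Finsupp.ne_iff.mp hv0
  refine Finset.sum_pos' (fun _ _ => Nat.zero_le _) ⟨i, Finset.mem_univ _, ?_⟩
  have : 0 < v i := Nat.pos_of_ne_zero hi
  positivity

lemma intDegree_add_C {K : Type*} [Field K] (x : RatFunc K) (hx : 0 < x.intDegree) (c : K) :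
    (x + RatFunc.C c).intDegree = x.intDegree := by
  by_cases hc : c = 0
  · simp [hc]
  have hC : RatFunc.C c ≠ 0 := by simpa using hc
  have hne : x + RatFunc.C c ≠ 0 := by
    intro h
    rw [eq_neg_of_add_eq_zero_left h] at hx
    simp at hx
  have hx0 : x ≠ 0 := by rintro rfl; simp at hx
  have h1 := RatFunc.intDegree_add_le hC hne
  have h2 := RatFunc.intDegree_add_le (x := x + RatFunc.C c) (y := -RatFunc.C c) (by simpa using hC)
    (by simpa using hx0)
  simp at h1 h2
  omega

lemma intDegree_aeval {K : Type*} [Field K] (g : RatFunc K) (hg : 0 < g.intDegree) :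
    ∀ (m : ℕ) (A : Polynomial K), A.natDegree = m → A ≠ 0 →
     (Polynomial.aeval g A ≠ 0 ∧ (Polynomial.aeval g A).intDegree = m * g.intDegree) := by
  have hg0 : g ≠ 0 := by rintro rfl; simp at hg
  intro m
  induction m with
  | zero =>
    intro A hA hA0
    obtain ⟨c, rfl⟩ := Polynomial.natDegree_eq_zero.mp hA
    rw [Polynomial.aeval_C, RatFunc.algebraMap_eq_C]
    simpa using hA0
  | succ m ih =>
    intro A hA hA0
    have hd : A.divX.natDegree = m := by rw [Polynomial.natDegree_divX_eq_natDegree_tsub_one]; omega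
    have hd0 : A.divX ≠ 0 := by
      intro h
      rw [Polynomial.divX_eq_zero_iff] at h
      rw [h] at hA
      simp at hA
    obtain ⟨h1, h2⟩ := ih _ hd hd0
    have h3 : (Polynomial.aeval g A.divX * g).intDegree = (m + 1 : ℕ) * g.intDegree := by
      rw [RatFunc.intDegree_mul h1 hg0, h2]; push_cast; ring
    have h4 : Polynomial.aeval g A = Polynomial.aeval g A.divX * g + RatFunc.C (A.coeff 0) := by
      conv_lhs => rw [← Polynomial.divX_mul_X_add A]
      simp [RatFunc.algebraMap_eq_C]
    have h5 : (Polynomial.aeval g A).intDegree = (m + 1 : ℕ) * g.intDegree := by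
      rw [h4, intDegree_add_C _ (by rw [h3]; positivity), h3]
    refine ⟨?_, h5⟩
    intro h
    rw [h] at h5
    have : 0 < ((m + 1 : ℕ) : ℤ) * g.intDegree := by positivity
    simp at h5
    omega

lemma mobius {K : Type*} [Field K] (g : RatFunc K) (hg : ¬ ∃ c, g = RatFunc.C c) :
    ∃ g' : RatFunc K, 0 < g'.intDegree ∧
      IntermediateField.adjoin K {g'} = IntermediateField.adjoin K {g} := by
  have inv : ∀ g : RatFunc K, IntermediateField.adjoin K {g⁻¹} = IntermediateField.adjoin K {g} := by
    intro g
    apply le_antisymm <;> rw [IntermediateField.adjoin_simple_le_iff]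
    · exact inv_mem (IntermediateField.mem_adjoin_simple_self K g)
    · simpa using inv_mem (IntermediateField.mem_adjoin_simple_self K g⁻¹)
  rcases lt_trichotomy g.intDegree 0 with h | h | h
  · exact ⟨g⁻¹, by rw [RatFunc.intDegree_inv]; omega, inv g⟩
  · set c := g.num.leadingCoeff with hc
    have hg0 : g ≠ 0 := by rintro rfl; exact hg ⟨0, by simp⟩
    have hn0 : g.num ≠ 0 := RatFunc.num_ne_zero hg0
    have hc0 : c ≠ 0 := by simpa [hc] using hn0
    have hgc : g - RatFunc.C c ≠ 0 := fun h => hg ⟨c, sub_eq_zero.mp h⟩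
    have hda : algebraMap (Polynomial K) (RatFunc K) g.denom ≠ 0 := by
      simpa using g.denom_ne_zero
    have heq : g - RatFunc.C c = algebraMap _ _ (g.num - Polynomial.C c * g.denom) /
        algebraMap (Polynomial K) (RatFunc K) g.denom := by
      rw [eq_div_iff hda, sub_mul]
      conv_lhs => enter [1, 1]; rw [← RatFunc.num_div_denom g]
      rw [div_mul_cancel₀ _ hda]
      simp
    have hn : g.num - Polynomial.C c * g.denom ≠ 0 := by
      intro h; rw [h] at heq; simp at heq; exact hgc heq
    have hnd : g.num.natDegree = g.denom.natDegree := by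
      have : g.intDegree = (g.num.natDegree : ℤ) - g.denom.natDegree := rfl
      omega
    have hlt : (g.num - Polynomial.C c * g.denom).degree < g.num.degree := by
      apply Polynomial.degree_sub_lt_left _ hn0
      · simp [(RatFunc.monic_denom g).leadingCoeff, ← hc]
      · rw [Polynomial.degree_C_mul hc0, Polynomial.degree_eq_natDegree hn0,
          Polynomial.degree_eq_natDegree g.denom_ne_zero, hnd]
    have hlt2 := Polynomial.natDegree_lt_natDegree hn hlt
    refine ⟨(g - RatFunc.C c)⁻¹, ?_, ?_⟩
    · rw [RatFunc.intDegree_inv, heq, RatFunc.intDegree_div ((map_ne_zero_iff _ (RatFunc.algebraMap_injective K)).mpr hn) hda,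
        RatFunc.intDegree_polynomial, RatFunc.intDegree_polynomial]
      omega
    · rw [inv]
      have hC : ∀ E : IntermediateField K (RatFunc K), RatFunc.C c ∈ E := fun E => by
        rw [← RatFunc.algebraMap_eq_C]; exact E.algebraMap_mem c
      apply le_antisymm <;> rw [IntermediateField.adjoin_simple_le_iff]
      · exact sub_mem (IntermediateField.mem_adjoin_simple_self K g) (hC _)
      · simpa using add_mem (IntermediateField.mem_adjoin_simple_self K (g - RatFunc.C c)) (hC _)
  · exact ⟨g, h, rfl⟩

lemma embed {K : Type*} [Field K] {n : ℕ}
    (F : IntermediateField K (FractionRing (MvPolynomial (Fin n) K)))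
    (hF : TrDegOne K F)
    (p : MvPolynomial (Fin n) K)
    (hpF : algebraMap (MvPolynomial (Fin n) K) (FractionRing (MvPolynomial (Fin n) K)) p ∈ F)
    (ψ : MvPolynomial (Fin n) K →ₐ[K] Polynomial K) (hψ : 0 < (ψ p).natDegree) :
    ∃ φ : F →ₐ[K] RatFunc K, φ ⟨_, hpF⟩ = algebraMap (Polynomial K) (RatFunc K) (ψ p) := by
  set a := algebraMap (MvPolynomial (Fin n) K) (FractionRing (MvPolynomial (Fin n) K)) with ha
  have hainj : Function.Injective a := IsFractionRing.injective (MvPolynomial (Fin n) K) (FractionRing (MvPolynomial (Fin n) K))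
  -- nonvanishing
  have hcomp : ∀ B : Polynomial K, B ≠ 0 → ψ (Polynomial.aeval p B) ≠ 0 := by
    intro B hB h
    have h : B.comp (ψ p) = 0 := by
      rw [← Polynomial.aeval_algHom_apply] at h; exact h
    rw [Polynomial.comp_eq_zero_iff] at h
    rcases h with h | ⟨_, h⟩
    · exact hB h
    · rw [h] at hψ; simp at hψ
  have hpoly : ∀ B : Polynomial K, a (Polynomial.aeval p B) = Polynomial.aeval (a p) B := by
    intro B
    exact (Polynomial.aeval_algebraMap_apply (FractionRing (MvPolynomial (Fin n) K)) p B).symm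
  -- algebraicity
  set P : F := ⟨a p, hpF⟩ with hP
  have htr : Transcendental K P := by
    rw [transcendental_iff]
    intro B hB
    by_contra hB0
    apply hcomp B hB0
    have h1 : Polynomial.aeval (a p) B = 0 := by
      have := congrArg F.val hB
      rw [← Polynomial.aeval_algHom_apply] at this
      exact this.trans (map_zero _)
    rw [← hpoly, map_eq_zero_iff a hainj] at h1
    rw [h1, map_zero]
  have hbasis : IsTranscendenceBasis K (fun _ : Unit => P) := by
    obtain ⟨t, ht⟩ := hF
    have hi : AlgebraicIndependent K (fun _ : Unit => P) := by
      rw [algebraicIndependent_unique_type_iff]; exact htr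
    exact hi.isTranscendenceBasis_of_lift_trdeg_le_of_finite ht.lift_cardinalMk_eq_trdeg.symm.le
  have halg := hbasis.isAlgebraic_field
  rw [Set.range_const] at halg
  -- localization
  let I : Ideal (MvPolynomial (Fin n) K) := RingHom.ker ψ
  have hI : I.IsPrime := RingHom.ker_isPrime _
  have hle : I.primeCompl ≤ nonZeroDivisors (MvPolynomial (Fin n) K) := Ideal.primeCompl_le_nonZeroDivisors I
  let S : Subalgebra (MvPolynomial (Fin n) K) (FractionRing (MvPolynomial (Fin n) K)) := Localization.subalgebra.ofField (FractionRing (MvPolynomial (Fin n) K)) I.primeCompl hle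
  have hloc : IsLocalization I.primeCompl S := Localization.subalgebra.isLocalization_ofField (FractionRing (MvPolynomial (Fin n) K)) _ _
  have hmem : ∀ x : (FractionRing (MvPolynomial (Fin n) K)), x ∈ S ↔ ∃ (u s : (MvPolynomial (Fin n) K)) (_ : s ∈ I.primeCompl), x = a u * (a s)⁻¹ :=
    fun x => Iff.rfl
  have hSic : IsIntegrallyClosed S := isIntegrallyClosed_of_isLocalization S I.primeCompl hle
  have hsub : ∀ x : F, x ∈ IntermediateField.adjoin K {P} → (x : (FractionRing (MvPolynomial (Fin n) K))) ∈ S := by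
    intro x hx
    obtain ⟨r, s, rfl⟩ := (IntermediateField.mem_adjoin_simple_iff K x).mp hx
    have hco : ∀ B : Polynomial K, ((Polynomial.aeval P B : F) : (FractionRing (MvPolynomial (Fin n) K))) = a (Polynomial.aeval p B) := by
      intro B
      rw [hpoly]
      exact (Polynomial.aeval_algHom_apply F.val P B).symm
    by_cases hs : s = 0
    · simp [hs, S.zero_mem]
    rw [hmem]
    refine ⟨Polynomial.aeval p r, Polynomial.aeval p s, hcomp s hs, ?_⟩
    rw [← hco, ← hco, ← div_eq_mul_inv]; rfl
  have hFS : ∀ x : F, (x : (FractionRing (MvPolynomial (Fin n) K))) ∈ S := by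
    intro x
    have hx : IsIntegral (IntermediateField.adjoin K {P}) x := (halg.isAlgebraic x).isIntegral
    let i : (IntermediateField.adjoin K {P}) →+* S :=
      RingHom.codRestrict ((algebraMap F (FractionRing (MvPolynomial (Fin n) K))).comp
        (algebraMap (IntermediateField.adjoin K {P}) F)) S (fun y => hsub y y.2)
    have hx2 : IsIntegral S (algebraMap F (FractionRing (MvPolynomial (Fin n) K)) x) := hx.map_of_comp_eq i (algebraMap F (FractionRing (MvPolynomial (Fin n) K))) rfl
    obtain ⟨y, hy⟩ := IsIntegrallyClosed.isIntegral_iff.mp hx2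
    have : (x : (FractionRing (MvPolynomial (Fin n) K))) = y := hy.symm
    rw [this]; exact y.2
  let j : F →+* S := RingHom.codRestrict (algebraMap F (FractionRing (MvPolynomial (Fin n) K))) S hFS
  let g : (MvPolynomial (Fin n) K) →+* RatFunc K := (algebraMap (Polynomial K) (RatFunc K)).comp ψ.toRingHom
  have hg : ∀ y : I.primeCompl, IsUnit (g y) := by
    intro y
    rw [isUnit_iff_ne_zero]
    exact (map_ne_zero_iff _ (RatFunc.algebraMap_injective K)).mpr y.2
  let f : S →+* RatFunc K := IsLocalization.lift hg
  have hfj : ∀ (r : (MvPolynomial (Fin n) K)) (h : a r ∈ F), f (j ⟨a r, h⟩) = g r := by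
    intro r h
    exact IsLocalization.lift_eq hg r
  refine ⟨{ f.comp j with commutes' := ?_ }, hfj p hpF⟩
  intro c
  have h1 : algebraMap K (FractionRing (MvPolynomial (Fin n) K)) c = a (algebraMap K (MvPolynomial (Fin n) K) c) := IsScalarTower.algebraMap_apply K (MvPolynomial (Fin n) K) (FractionRing (MvPolynomial (Fin n) K)) c
  have h2 : algebraMap K F c = ⟨a (algebraMap K (MvPolynomial (Fin n) K) c), h1 ▸ F.algebraMap_mem c⟩ := Subtype.ext h1
  change f (j (algebraMap K F c)) = _
  rw [h2, hfj]
  change algebraMap (Polynomial K) (RatFunc K) (ψ (algebraMap K (MvPolynomial (Fin n) K) c)) = _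
  rw [AlgHom.commutes, ← IsScalarTower.algebraMap_apply]

/-- If `K ⊆ F ⊆ K(x₁,…,xₙ)` has transcendence degree 1 over `K` and
`F` contains a non-constant polynomial, then `F` is generated over `K` by a
polynomial: `F = K(q)` for some `q ∈ K[x₁,…,xₙ]`. -/
theorem luroth_polynomial_generator
    {K : Type*} [Field K] {n : ℕ}
    (F : IntermediateField K (FractionRing (MvPolynomial (Fin n) K)))
    (hF : TrDegOne K F)
    (p : MvPolynomial (Fin n) K) (hp : 0 < p.totalDegree)
    (hpF : algebraMap (MvPolynomial (Fin n) K) (FractionRing (MvPolynomial (Fin n) K)) p ∈ F) :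
    ∃ q : MvPolynomial (Fin n) K,
      F = IntermediateField.adjoin K
        {algebraMap (MvPolynomial (Fin n) K) (FractionRing (MvPolynomial (Fin n) K)) q} := by
  obtain ⟨ψ, hψ⟩ := kron p hp
  obtain ⟨φ, hφ⟩ := embed F hF p hpF ψ hψ
  set P : F := ⟨_, hpF⟩ with hP
  have hψ0 : ψ p ≠ 0 := by rintro h; simp [h] at hψ
  have hPdeg : 0 < (φ P).intDegree := by
    rw [hφ, RatFunc.intDegree_polynomial]; exact_mod_cast hψ
  -- Lüroth
  obtain ⟨g₀, hg₀⟩ : ∃ g, φ.fieldRange = IntermediateField.adjoin K {g} :=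
    ⟨_, RatFunc.Luroth.eq_adjoin_generator⟩
  have hnc : ¬ ∃ c, g₀ = RatFunc.C c := by
    rintro ⟨c, rfl⟩
    have h1 : φ P ∈ φ.fieldRange := ⟨P, rfl⟩
    rw [hg₀, ← RatFunc.algebraMap_eq_C, IntermediateField.adjoin_simple_eq_bot_iff.mpr
      (IntermediateField.algebraMap_mem _ c), IntermediateField.mem_bot] at h1
    obtain ⟨d, hd⟩ := h1
    rw [← hd, RatFunc.algebraMap_eq_C] at hPdeg
    simp at hPdeg
  obtain ⟨g, hgdeg, hg⟩ := mobius g₀ hnc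
  rw [← hg] at hg₀
  obtain ⟨f, hf⟩ : g ∈ φ.fieldRange := hg₀ ▸ IntermediateField.mem_adjoin_simple_self K g
  have hf : φ f = g := hf
  have htop : ∀ x : F, x ∈ IntermediateField.adjoin K {f} := by
    intro x
    have h1 : φ x ∈ φ.fieldRange := ⟨x, rfl⟩
    rw [hg₀, IntermediateField.mem_adjoin_simple_iff] at h1
    obtain ⟨r, s, h⟩ := h1
    rw [IntermediateField.mem_adjoin_simple_iff]
    refine ⟨r, s, φ.injective ?_⟩
    change φ x = φ _
    rw [h, map_div₀, ← Polynomial.aeval_algHom_apply, ← Polynomial.aeval_algHom_apply, hf]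
  -- the equation
  obtain ⟨A, B, hAB⟩ := (IntermediateField.mem_adjoin_simple_iff K P).mp (htop P)
  have hφAB : φ P = Polynomial.aeval g A / Polynomial.aeval g B := by
    rw [hAB, map_div₀, ← Polynomial.aeval_algHom_apply, ← Polynomial.aeval_algHom_apply, hf]
  have hA : A ≠ 0 := by rintro rfl; simp [hφAB] at hPdeg
  have hB : B ≠ 0 := by rintro rfl; simp [hφAB] at hPdeg
  obtain ⟨hA1, hA2⟩ := intDegree_aeval g hgdeg _ A rfl hA
  obtain ⟨hB1, hB2⟩ := intDegree_aeval g hgdeg _ B rfl hB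
  have hlt : B.natDegree < A.natDegree := by
    rw [hφAB, RatFunc.intDegree_div hA1 hB1, hA2, hB2, ← sub_mul] at hPdeg
    have := pos_of_mul_pos_left hPdeg hgdeg.le
    omega
  have hfB : Polynomial.aeval f B ≠ 0 := by
    intro h
    apply hB1
    rw [← hf, Polynomial.aeval_algHom_apply, h, map_zero]
  rw [eq_div_iff hfB] at hAB
  have hABL := congrArg F.val hAB
  rw [map_mul, ← Polynomial.aeval_algHom_apply, ← Polynomial.aeval_algHom_apply] at hABL
  -- integrality
  have hint : IsIntegral (MvPolynomial (Fin n) K) (F.val f) := by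
    let Q : Polynomial (MvPolynomial (Fin n) K) := A.map (algebraMap K (MvPolynomial (Fin n) K)) - Polynomial.C p * B.map (algebraMap K (MvPolynomial (Fin n) K))
    have hinj : Function.Injective (algebraMap K (MvPolynomial (Fin n) K)) := (algebraMap K (MvPolynomial (Fin n) K)).injective
    have hdegQ : (Polynomial.C p * B.map (algebraMap K (MvPolynomial (Fin n) K))).degree <
        (A.map (algebraMap K (MvPolynomial (Fin n) K))).degree := by
      rw [Polynomial.degree_C_mul (show p ≠ 0 by rintro rfl; simp at hp)]
      rw [Polynomial.degree_map_eq_of_injective hinj, Polynomial.degree_map_eq_of_injective hinj]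
      exact Polynomial.degree_lt_degree hlt
    have hlc : Q.leadingCoeff = algebraMap K (MvPolynomial (Fin n) K) A.leadingCoeff := by
      rw [Polynomial.leadingCoeff_sub_of_degree_lt hdegQ,
        Polynomial.leadingCoeff_map_of_injective hinj]
    let Q' : Polynomial (MvPolynomial (Fin n) K) := Polynomial.C (algebraMap K (MvPolynomial (Fin n) K) A.leadingCoeff⁻¹) * Q
    refine ⟨Q', ?_, ?_⟩
    · apply Polynomial.monic_C_mul_of_mul_leadingCoeff_eq_one
      rw [hlc, ← map_mul, inv_mul_cancel₀ (by simpa using hA), map_one]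
    · have : Polynomial.aeval (F.val f) Q = 0 := by
        simp only [Q, map_sub, map_mul, Polynomial.aeval_map_algebraMap, Polynomial.aeval_C]
        rw [← hABL, sub_eq_zero]
        rfl
      rw [← Polynomial.aeval_def, map_mul, this, mul_zero]
  obtain ⟨q, hq⟩ := IsIntegrallyClosed.isIntegral_iff.mp hint
  refine ⟨q, ?_⟩
  rw [hq]
  have h1 : IntermediateField.adjoin K {f} = ⊤ := eq_top_iff.mpr fun x _ => htop x
  have h2 := congrArg (IntermediateField.map F.val) h1
  rw [IntermediateField.adjoin_map, Set.image_singleton, ← AlgHom.fieldRange_eq_map,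
    IntermediateField.fieldRange_val] at h2
  exact h2.symm
end

section
/- Let f̄ = f̄_n/f̄_d ∈ K(x₁,…,xₙ) in lowest terms with lm(f̄_n) > lm(f̄_d) (for some admissible monomial ordering), f̄_n(0,…,0) = 0 and f̄_d(0,…,0) ≠ 0. Then for every uni-multivariate decomposition f̄ = g(h) there exists an equivalent decomposition f̄ = ḡ(h̄) (i.e. h̄ = l(h) for a degree-1 unit l) such that, writing ḡ = ḡ_n/ḡ_d in lowest terms, deg ḡ_n > deg ḡ_d and ḡ_n(0) = 0. -/
open MvPolynomial

/-- The multidegree (exponent of the leading monomial) of a multivariate polynomial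
with respect to a monomial order, valued in the ordered synonym type. -/
noncomputable def mdeg {σ K : Type*} [CommSemiring K] (m : MonomialOrder σ)
    (p : MvPolynomial σ K) : m.syn :=
  p.support.sup (fun d => m.toSyn d)


section Helpers

variable {K : Type*} [Field K] {n : ℕ}

/-- degree with bottom -/
noncomputable def wdeg (m : MonomialOrder (Fin n)) (p : MvPolynomial (Fin n) K) :
    WithBot m.syn := m.toWithBotSyn (m.withBotDegree p)

lemma wdeg_of_ne (m : MonomialOrder (Fin n)) {p : MvPolynomial (Fin n) K} (hp : p ≠ 0) :
    wdeg m p = ((m.toSyn (m.degree p) : m.syn) : WithBot m.syn) := by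
  classical
  rw [wdeg, MonomialOrder.withBotDegree_eq, if_neg hp]; rfl

lemma wdeg_zero (m : MonomialOrder (Fin n)) : wdeg m (0 : MvPolynomial (Fin n) K) = ⊥ := rfl

lemma wdeg_mul (m : MonomialOrder (Fin n)) (p q : MvPolynomial (Fin n) K) :
    wdeg m (p * q) = wdeg m p + wdeg m q := by
  rw [wdeg, MonomialOrder.withBotDegree_mul, map_add]; rfl

lemma wdeg_add (m : MonomialOrder (Fin n)) (p q : MvPolynomial (Fin n) K) :
    wdeg m (p + q) ≤ max (wdeg m p) (wdeg m q) :=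
  MonomialOrder.withBotDegree_add_le _ _

lemma wdeg_C (m : MonomialOrder (Fin n)) (c : K) :
    wdeg m (C c : MvPolynomial (Fin n) K) ≤ 0 := by
  by_cases hc : c = 0
  · simp [hc, wdeg_zero]
  · rw [wdeg_of_ne m (by simpa using hc)]; simp

lemma wdeg_ne_bot (m : MonomialOrder (Fin n)) {p : MvPolynomial (Fin n) K} (hp : p ≠ 0) :
    wdeg m p ≠ ⊥ := by
  rw [wdeg_of_ne m hp]; simp

lemma ne_zero_of_wdeg_lt {m : MonomialOrder (Fin n)} {p q : MvPolynomial (Fin n) K}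
    (h : wdeg m p < wdeg m q) : q ≠ 0 := by
  rintro rfl; simp [wdeg_zero] at h

lemma wdeg_C_mul (m : MonomialOrder (Fin n)) (c : K) (p : MvPolynomial (Fin n) K) :
    wdeg m (C c * p) ≤ wdeg m p := by
  rw [wdeg_mul]
  calc _ ≤ 0 + wdeg m p := by gcongr; exact wdeg_C m c
    _ = _ := zero_add _

lemma wdeg_lt_of_mdeg {m : MonomialOrder (Fin n)} {p q : MvPolynomial (Fin n) K}
    (hp : p ≠ 0) (hlt : mdeg m p < mdeg m q) : wdeg m p < wdeg m q := by
  have key : ∀ r : MvPolynomial (Fin n) K, mdeg m r = m.toSyn (m.degree r) := by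
    intro r; simp [mdeg, MonomialOrder.degree]
  have hq : q ≠ 0 := by
    rintro rfl
    have h0 : mdeg m (0 : MvPolynomial (Fin n) K) = ⊥ := by simp only [mdeg, support_zero, Finset.sup_empty]
    rw [h0] at hlt
    exact not_lt_bot hlt
  rw [wdeg_of_ne m hp, wdeg_of_ne m hq, ← key, ← key]
  exact_mod_cast hlt

/-- cancellation of leading terms -/
lemma exists_cancel (m : MonomialOrder (Fin n)) {p q : MvPolynomial (Fin n) K}
    (hp : p ≠ 0) (hq : q ≠ 0) (he : wdeg m p = wdeg m q) :
    ∃ c : K, wdeg m (p - C c * q) < wdeg m q := by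
  have hd : m.degree p = m.degree q := by
    rw [wdeg_of_ne m hp, wdeg_of_ne m hq] at he
    exact m.toSyn.injective (by exact_mod_cast he)
  have hlq : m.leadingCoeff q ≠ 0 := m.leadingCoeff_ne_zero_iff.2 hq
  refine ⟨m.leadingCoeff p / m.leadingCoeff q, ?_⟩
  set c := m.leadingCoeff p / m.leadingCoeff q with hc
  have hle : wdeg m (p - C c * q) ≤ wdeg m q := by
    have : p - C c * q = p + C (-c) * q := by simp; ring
    rw [this]
    exact (wdeg_add _ _ _).trans (max_le he.le (wdeg_C_mul _ _ _))
  refine lt_of_le_of_ne hle fun h => ?_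
  have hr : p - C c * q ≠ 0 := by
    intro h0; rw [h0, wdeg_zero] at h; exact wdeg_ne_bot m hq h.symm
  have hd' : m.degree (p - C c * q) = m.degree q := by
    rw [wdeg_of_ne m hr, wdeg_of_ne m hq] at h
    exact m.toSyn.injective (by exact_mod_cast h)
  have h1 : m.leadingCoeff (p - C c * q) = 0 := by
    rw [MonomialOrder.leadingCoeff, hd', coeff_sub, coeff_C_mul]
    have : coeff (m.degree q) p = m.leadingCoeff p := by rw [MonomialOrder.leadingCoeff, hd]
    rw [this]
    change m.leadingCoeff p - c * m.leadingCoeff q = 0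
    rw [hc, div_mul_cancel₀ _ hlq, sub_self]
  exact hr (m.leadingCoeff_eq_zero_iff.1 h1)

local notation "𝓐" => MvPolynomial (Fin n) K
local notation "𝓛" => FractionRing (MvPolynomial (Fin n) K)

lemma wdeg_mul_lt_left {m : MonomialOrder (Fin n)} {p q r : 𝓐} (hr : r ≠ 0)
    (h : wdeg m p < wdeg m q) : wdeg m (p * r) < wdeg m (q * r) := by
  rw [wdeg_mul, wdeg_mul]
  exact WithBot.add_lt_add_right (wdeg_ne_bot m hr) h

lemma am_ne {q : 𝓐} (hq : q ≠ 0) : algebraMap 𝓐 𝓛 q ≠ 0 := by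
  simpa using hq

lemma am_C (c : K) : algebraMap 𝓐 𝓛 (C c) = algebraMap K 𝓛 c := by
  rw [IsScalarTower.algebraMap_apply K 𝓐 𝓛]; rfl

/-- elements of negative degree -/
noncomputable def subM (m : MonomialOrder (Fin n)) : NonUnitalSubalgebra K 𝓛 where
  carrier := {x | ∃ p q : 𝓐, wdeg m p < wdeg m q ∧ x = algebraMap 𝓐 𝓛 p / algebraMap 𝓐 𝓛 q}
  zero_mem' := ⟨0, 1, by
    rw [wdeg_zero]; exact bot_lt_iff_ne_bot.2 (wdeg_ne_bot m one_ne_zero), by simp⟩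
  add_mem' := by
    rintro _ _ ⟨p, q, h, rfl⟩ ⟨p', q', h', rfl⟩
    have hq := ne_zero_of_wdeg_lt h
    have hq' := ne_zero_of_wdeg_lt h'
    refine ⟨p * q' + q * p', q * q', ?_, ?_⟩
    · refine (wdeg_add _ _ _).trans_lt (max_lt (wdeg_mul_lt_left hq' h) ?_)
      rw [mul_comm q p', mul_comm q q']
      exact wdeg_mul_lt_left hq h'
    · rw [div_add_div _ _ (am_ne hq) (am_ne hq')]; simp
  mul_mem' := by
    rintro _ _ ⟨p, q, h, rfl⟩ ⟨p', q', h', rfl⟩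
    have hq := ne_zero_of_wdeg_lt h
    have hq' := ne_zero_of_wdeg_lt h'
    refine ⟨p * p', q * q', ?_, ?_⟩
    · refine lt_of_le_of_lt ?_ (wdeg_mul_lt_left hq' h)
      rw [wdeg_mul, wdeg_mul]
      gcongr
    · rw [div_mul_div_comm]; simp
  smul_mem' := by
    rintro c _ ⟨p, q, h, rfl⟩
    refine ⟨C c * p, q, (wdeg_C_mul _ _ _).trans_lt h, ?_⟩
    rw [Algebra.smul_def, map_mul, am_C, mul_div_assoc]

/-- elements regular at zero and vanishing there -/
noncomputable def subN : NonUnitalSubalgebra K 𝓛 where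
  carrier := {x | ∃ p q : 𝓐, eval 0 q ≠ 0 ∧ eval 0 p = 0 ∧
    x = algebraMap 𝓐 𝓛 p / algebraMap 𝓐 𝓛 q}
  zero_mem' := ⟨0, 1, by simp, by simp, by simp⟩
  add_mem' := by
    rintro _ _ ⟨p, q, h, hp, rfl⟩ ⟨p', q', h', hp', rfl⟩
    have hq : q ≠ 0 := by rintro rfl; simp at h
    have hq' : q' ≠ 0 := by rintro rfl; simp at h'
    refine ⟨p * q' + q * p', q * q', by rw [map_mul]; exact mul_ne_zero h h',
      by rw [map_add, map_mul, map_mul, hp, hp']; ring, ?_⟩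
    rw [div_add_div _ _ (am_ne hq) (am_ne hq')]; simp
  mul_mem' := by
    rintro _ _ ⟨p, q, h, hp, rfl⟩ ⟨p', q', h', hp', rfl⟩
    refine ⟨p * p', q * q', by rw [map_mul]; exact mul_ne_zero h h',
      by rw [map_mul, hp, zero_mul], ?_⟩
    rw [div_mul_div_comm]; simp
  smul_mem' := by
    rintro c _ ⟨p, q, h, hp, rfl⟩
    refine ⟨C c * p, q, h, by rw [map_mul, hp, mul_zero], ?_⟩
    rw [Algebra.smul_def, map_mul, am_C, mul_div_assoc]

lemma const_subM {m : MonomialOrder (Fin n)} {c : K} (h : algebraMap K 𝓛 c ∈ subM m) : c = 0 := by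
  obtain ⟨p, q, h, he⟩ := h
  have hq := ne_zero_of_wdeg_lt h
  rw [eq_div_iff (am_ne hq), ← am_C, ← map_mul] at he
  have he := IsFractionRing.injective 𝓐 𝓛 he
  by_contra hc
  have h2 : wdeg m q ≤ wdeg m p := by
    have : q = C c⁻¹ * p := by
      rw [← he, ← mul_assoc, ← C_mul, inv_mul_cancel₀ hc]; simp
    conv_lhs => rw [this]
    exact wdeg_C_mul _ _ _
  exact absurd h h2.not_gt

lemma const_subN {c : K} (h : algebraMap K 𝓛 c ∈ (subN : NonUnitalSubalgebra K 𝓛)) : c = 0 := by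
  obtain ⟨p, q, h, hp, he⟩ := h
  have hq : q ≠ 0 := by rintro rfl; simp at h
  rw [eq_div_iff (am_ne hq), ← am_C, ← map_mul] at he
  have he := IsFractionRing.injective 𝓐 𝓛 he
  have := congrArg (eval 0) he
  rw [map_mul, hp, eval_C] at this
  exact (mul_eq_zero.1 this).resolve_right h

/-- polynomial evaluated at an element of a non-unital subalgebra -/
lemma aeval_sub_mem {L : Type*} [Field L] [Algebra K L] (S : NonUnitalSubalgebra K L) {u : L}
    (hu : u ∈ S) (P : Polynomial K) :
    Polynomial.aeval u P - algebraMap K L (P.coeff 0) ∈ S := by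
  induction P using Polynomial.induction_on' with
  | add p q hp hq =>
    have := add_mem hp hq
    simp only [map_add, Polynomial.coeff_add]
    convert this using 1; ring
  | monomial k a =>
    rcases k with _ | k
    · simp
    · have hk : u ^ (k + 1) ∈ S := by
        induction k with
        | zero => simpa using hu
        | succ k ih => rw [pow_succ]; exact mul_mem ih hu
      have := SMulMemClass.smul_mem (S := NonUnitalSubalgebra K L) a hk
      simpa [Polynomial.aeval_monomial, Polynomial.coeff_monomial, Algebra.smul_def] using this

lemma aeval_mul_mem {L : Type*} [Field L] [Algebra K L] (S : NonUnitalSubalgebra K L) {u v : L}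
    (hu : u ∈ S) (hv : v ∈ S) (P : Polynomial K) :
    Polynomial.aeval u P * v ∈ S := by
  have h1 := mul_mem (aeval_sub_mem S hu P) hv
  have h2 := SMulMemClass.smul_mem (S := NonUnitalSubalgebra K L) (P.coeff 0) hv
  rw [Algebra.smul_def] at h2
  have := add_mem h1 h2
  convert this using 1; ring

lemma transc {L : Type*} [Field L] [Algebra K L] (S : NonUnitalSubalgebra K L)
    (hS : ∀ c : K, algebraMap K L c ∈ S → c = 0) {u : L}
    (hu : u ∈ S) (hu0 : u ≠ 0) : Transcendental K u := by
  rw [transcendental_iff]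
  intro P hP
  by_contra hP0
  obtain ⟨Q, hQ, hnd⟩ := Polynomial.exists_eq_pow_rootMultiplicity_mul_and_not_dvd P hP0 0
  rw [hQ] at hP
  simp only [map_zero, sub_zero, map_mul, map_pow, Polynomial.aeval_X] at hP
  rw [map_zero, sub_zero, Polynomial.X_dvd_iff] at hnd
  have hQ0 := (mul_eq_zero.1 hP).resolve_left (pow_ne_zero _ hu0)
  have := aeval_sub_mem S hu Q
  rw [hQ0, zero_sub, ← map_neg] at this
  exact hnd (neg_eq_zero.1 (hS _ this))

lemma trichotomy (m : MonomialOrder (Fin n)) (h : 𝓛) :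
    (h ≠ 0 ∧ h⁻¹ ∈ subM m) ∨ ∃ c : K, h - algebraMap K 𝓛 c ∈ subM m := by
  obtain ⟨p, q, hq, rfl⟩ := IsFractionRing.div_surjective (A := 𝓐) h
  have hq : q ≠ 0 := nonZeroDivisors.ne_zero hq
  rcases lt_trichotomy (wdeg m p) (wdeg m q) with hl | hl | hl
  · right; exact ⟨0, p, q, hl, by simp⟩
  · right
    have hp : p ≠ 0 := by
      rintro rfl; rw [wdeg_zero] at hl; exact wdeg_ne_bot m hq hl.symm
    obtain ⟨c, hc⟩ := exists_cancel m hp hq hl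
    refine ⟨c, p - C c * q, q, hc, ?_⟩
    rw [map_sub, map_mul, am_C, sub_div, mul_div_cancel_right₀ _ (am_ne hq)]
  · left
    have hp := ne_zero_of_wdeg_lt hl
    exact ⟨div_ne_zero (am_ne hp) (am_ne hq), q, p, hl, by rw [inv_div]⟩

/-- the degree claim -/
lemma core1 {L : Type*} [Field L] [Algebra K L] (S : NonUnitalSubalgebra K L)
    (hS : ∀ c : K, algebraMap K L c ∈ S → c = 0) {f h : L} (hf : f⁻¹ ∈ S) (hf0 : f ≠ 0)
    (hh : h⁻¹ ∈ S) (hh0 : h ≠ 0) (g : RatFunc K) (hg : f = ratEval g h) :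
    g.denom.natDegree < g.num.natDegree := by
  by_contra hlt
  push Not at hlt
  have hi : Invertible h := invertibleOfNonzero hh0
  have e1 := Polynomial.eval₂_reflect_mul_pow (algebraMap K L) h _ g.num hlt
  have e2 := Polynomial.eval₂_reflect_mul_pow (algebraMap K L) h _ g.denom le_rfl
  rw [invOf_eq_inv, ← Polynomial.aeval_def, ← Polynomial.aeval_def] at e1 e2
  rw [ratEval, ← e1, ← e2, mul_div_mul_right _ _ (pow_ne_zero _ hh0)] at hg
  set s := Polynomial.aeval h⁻¹ (Polynomial.reflect g.denom.natDegree g.num)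
  set P := Polynomial.reflect g.denom.natDegree g.denom with hP
  have ht : Polynomial.aeval h⁻¹ P ≠ 0 := by
    intro h0; rw [h0, div_zero] at hg; exact hf0 hg
  have hts : Polynomial.aeval h⁻¹ P = s * f⁻¹ := by
    rw [hg]
    have : s ≠ 0 := by
      intro h0; rw [h0, zero_div] at hg; exact hf0 hg
    field_simp
  have h1 : Polynomial.aeval h⁻¹ P ∈ S := by
    rw [hts]; exact aeval_mul_mem S hh hf _
  have h2 := aeval_sub_mem S hh P
  have h3 := sub_mem h1 h2
  rw [sub_sub_cancel] at h3
  have h4 := hS _ h3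
  have : P.coeff 0 = g.denom.leadingCoeff := by
    rw [hP, Polynomial.coeff_reflect]; simp [Polynomial.revAt_le]
  rw [this, Polynomial.leadingCoeff_eq_zero] at h4
  exact g.denom_ne_zero h4

/-- regularity at zero -/
lemma core2 (Fn Fd : 𝓐) (h0d : eval (0 : Fin n → K) Fd ≠ 0) (g : RatFunc K) (h : 𝓛)
    (hden : Polynomial.aeval h g.denom ≠ 0)
    (hg : algebraMap 𝓐 𝓛 Fn / algebraMap 𝓐 𝓛 Fd = ratEval g h)
    (hdeg : g.denom.natDegree < g.num.natDegree) :
    ∃ α : K, h - algebraMap K 𝓛 α ∈ (subN : NonUnitalSubalgebra K 𝓛) := by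
  have hFd : Fd ≠ 0 := by rintro rfl; simp at h0d
  set P : Polynomial 𝓐 := Polynomial.C Fd * g.num.map (algebraMap K 𝓐) -
    Polynomial.C Fn * g.denom.map (algebraMap K 𝓐) with hP
  have hroot : Polynomial.aeval h P = 0 := by
    rw [ratEval, div_eq_div_iff (am_ne hFd) hden] at hg
    rw [hP, map_sub, map_mul, map_mul, Polynomial.aeval_map_algebraMap,
      Polynomial.aeval_map_algebraMap, Polynomial.aeval_C, Polynomial.aeval_C, hg]
    ring
  have hn0 : g.num.leadingCoeff ≠ 0 := by
    rw [Ne, Polynomial.leadingCoeff_eq_zero]; intro h0; simp [h0] at hdeg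
  have hcoef : P.coeff g.num.natDegree = Fd * C g.num.leadingCoeff := by
    rw [hP, Polynomial.coeff_sub, Polynomial.coeff_C_mul, Polynomial.coeff_C_mul,
      Polynomial.coeff_map, Polynomial.coeff_map, Polynomial.coeff_eq_zero_of_natDegree_lt hdeg]
    simp [MvPolynomial.algebraMap_eq]
  have hnd : P.natDegree = g.num.natDegree := by
    apply Polynomial.natDegree_eq_of_le_of_coeff_ne_zero
    · rw [hP]
      refine (Polynomial.natDegree_sub_le _ _).trans (max_le ?_ ?_)
      · exact (Polynomial.natDegree_C_mul_le _ _).trans Polynomial.natDegree_map_le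
      · exact ((Polynomial.natDegree_C_mul_le _ _).trans Polynomial.natDegree_map_le).trans hdeg.le
    · rw [hcoef]; exact mul_ne_zero hFd (by simpa using hn0)
  have hdvd := den_dvd_of_is_root (A := 𝓐) hroot
  rw [Polynomial.leadingCoeff, hnd, hcoef] at hdvd
  set q : 𝓐 := (IsFractionRing.den 𝓐 h : 𝓐) with hq
  set p : 𝓐 := IsFractionRing.num 𝓐 h with hp
  have hq0 : eval (0 : Fin n → K) q ≠ 0 := by
    obtain ⟨r, hr⟩ := hdvd
    intro h0
    have := congrArg (eval (0 : Fin n → K)) hr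
    rw [map_mul, map_mul, h0, zero_mul, eval_C] at this
    exact (mul_ne_zero h0d hn0) this
  have hqn : q ≠ 0 := by intro h0; rw [h0] at hq0; simp at hq0
  have hh : h = algebraMap 𝓐 𝓛 p / algebraMap 𝓐 𝓛 q := by
    rw [← IsFractionRing.mk'_eq_div, IsFractionRing.mk'_num_den]
  refine ⟨eval 0 p / eval 0 q, p - C (eval 0 p / eval 0 q) * q, q, hq0, ?_, ?_⟩
  · rw [map_sub, map_mul, eval_C, div_mul_cancel₀ _ hq0, sub_self]
  · rw [map_sub, map_mul, am_C, sub_div, mul_div_cancel_right₀ _ (am_ne hqn), ← hh]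

/-- vanishing of the numerator -/
lemma core3 {L : Type*} [Field L] [Algebra K L] (S : NonUnitalSubalgebra K L)
    (hS : ∀ c : K, algebraMap K L c ∈ S → c = 0) {f h : L} (hf : f ∈ S)
    (hh : h ∈ S) (g : RatFunc K) (hden : Polynomial.aeval h g.denom ≠ 0) (hg : f = ratEval g h) :
    g.num.coeff 0 = 0 := by
  rw [ratEval, eq_div_iff hden, mul_comm] at hg
  have h1 := aeval_mul_mem S hh hf g.denom
  rw [hg] at h1
  have h3 := sub_mem h1 (aeval_sub_mem S hh g.num)
  rw [sub_sub_cancel] at h3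
  exact hS _ h3

/-- evaluation at a transcendental element, as an algebra homomorphism -/
lemma exists_hom {L : Type*} [Field L] [Algebra K L] {a : L} (ha : Transcendental K a) :
    ∃ φ : RatFunc K →ₐ[K] L, (∀ g, φ g = ratEval g a) ∧ φ RatFunc.X = a := by
  have hinj : Function.Injective (Polynomial.aeval a : Polynomial K →ₐ[K] L) :=
    transcendental_iff_injective.1 ha
  have hle := nonZeroDivisors_le_comap_nonZeroDivisors_of_injective
    (Polynomial.aeval a : Polynomial K →ₐ[K] L) hinj
  refine ⟨RatFunc.liftAlgHom (Polynomial.aeval a) hle, fun g => ?_, ?_⟩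
  · rw [RatFunc.liftAlgHom_apply]; rfl
  · rw [RatFunc.liftAlgHom_apply]; simp

lemma ratEval_map {L M : Type*} [Field L] [Algebra K L] [Field M] [Algebra K M]
    (φ : L →ₐ[K] M) (g : RatFunc K) (a : L) : φ (ratEval g a) = ratEval g (φ a) := by
  simp [ratEval, map_div₀, Polynomial.aeval_algHom_apply]

lemma subM_shift {m : MonomialOrder (Fin n)} {x : 𝓛} (hx0 : x ≠ 0) (hx : x⁻¹ ∈ subM m) (α : K) :
    (x - algebraMap K 𝓛 α)⁻¹ ∈ subM m := by
  obtain ⟨p, q, h, he⟩ := hx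
  have hq := ne_zero_of_wdeg_lt h
  have hp : p ≠ 0 := by
    rintro rfl
    rw [map_zero, zero_div] at he
    exact inv_ne_zero hx0 he
  refine ⟨p, q - C α * p, ?_, ?_⟩
  · by_contra hle
    push Not at hle
    have h2 : wdeg m ((q - C α * p) + C α * p) ≤ wdeg m p :=
      (wdeg_add _ _ _).trans (max_le hle (wdeg_C_mul _ _ _))
    rw [sub_add_cancel] at h2
    exact absurd h h2.not_gt
  · have hx : x = algebraMap 𝓐 𝓛 q / algebraMap 𝓐 𝓛 p := by
      rw [← inv_inv x, he, inv_div]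
    rw [hx, map_sub, map_mul, am_C,
      ← inv_div (algebraMap 𝓐 𝓛 q - algebraMap K 𝓛 α * algebraMap 𝓐 𝓛 p) (algebraMap 𝓐 𝓛 p),
      sub_div, mul_div_cancel_right₀ _ (am_ne hp)]

lemma num_denom_of_coprime {p q : Polynomial K} (hq : q.Monic) (hpq : IsCoprime p q) :
    (algebraMap _ (RatFunc K) p / algebraMap _ (RatFunc K) q).num = p ∧
    (algebraMap _ (RatFunc K) p / algebraMap _ (RatFunc K) q).denom = q := by
  set x := algebraMap _ (RatFunc K) p / algebraMap _ (RatFunc K) q with hx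
  have h1 := (RatFunc.num_mul_eq_mul_denom_iff (x := x) hq.ne_zero).2 hx
  have h2 : q ∣ x.denom := hpq.symm.dvd_of_dvd_mul_left ⟨x.num, by rw [← h1]; ring⟩
  have h3 : x.denom ∣ q := RatFunc.denom_div_dvd p q
  have h4 : x.denom = q :=
    Polynomial.eq_of_monic_of_associated (RatFunc.monic_denom x) hq (associated_of_dvd_dvd h3 h2)
  refine ⟨?_, h4⟩
  rw [h4] at h1
  exact mul_right_cancel₀ hq.ne_zero h1

lemma transc_of_inv {L : Type*} [Field L] [Algebra K L] {x : L} (hx : Transcendental K x⁻¹) :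
    Transcendental K x := fun ha => hx ha.inv

lemma transc_sub {L : Type*} [Field L] [Algebra K L] {x : L} (hx : Transcendental K x) (α : K) :
    Transcendental K (x - algebraMap K L α) := by
  intro ha
  have := ha.add (isAlgebraic_algebraMap (R := K) (A := L) α)
  rw [sub_add_cancel] at this
  exact hx this

set_option maxHeartbeats 2000000 in
/-- the final assembly, after moving the pole of `h` to infinity -/
lemma finish (m : MonomialOrder (Fin n)) (Fn Fd : 𝓐) (hFd : Fd ≠ 0)
    (hlm : mdeg m Fd < mdeg m Fn)
    (h0n : eval (0 : Fin n → K) Fn = 0) (h0d : eval (0 : Fin n → K) Fd ≠ 0)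
    (g : RatFunc K) (h : 𝓛)
    (hdec : algebraMap 𝓐 𝓛 Fn / algebraMap 𝓐 𝓛 Fd = ratEval g h)
    (h1 : 𝓛) (h10 : h1 ≠ 0) (h1M : h1⁻¹ ∈ subM m) (r : RatFunc K) (hr : ratEval r h1 = h)
    (hl : ∀ α : K, ∃ l : RatFunc K, max l.num.natDegree l.denom.natDegree = 1 ∧
      h1 - algebraMap K 𝓛 α = ratEval l h) :
    ∃ (l gbar : RatFunc K) (hbar : 𝓛),
      max l.num.natDegree l.denom.natDegree = 1 ∧
      hbar = ratEval l h ∧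
      algebraMap 𝓐 𝓛 Fn / algebraMap 𝓐 𝓛 Fd = ratEval gbar hbar ∧
      gbar.denom.natDegree < gbar.num.natDegree ∧
      gbar.num.coeff 0 = 0 := by
  have hSM : ∀ c : K, algebraMap K 𝓛 c ∈ subM m → c = 0 := fun c hc => const_subM (m := m) hc
  have hw := wdeg_lt_of_mdeg hFd hlm
  have hFn := ne_zero_of_wdeg_lt hw
  have hf0 : algebraMap 𝓐 𝓛 Fn / algebraMap 𝓐 𝓛 Fd ≠ 0 := div_ne_zero (am_ne hFn) (am_ne hFd)
  have hfM : (algebraMap 𝓐 𝓛 Fn / algebraMap 𝓐 𝓛 Fd)⁻¹ ∈ subM m :=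
    ⟨Fd, Fn, hw, by rw [inv_div]⟩
  have hfN : algebraMap 𝓐 𝓛 Fn / algebraMap 𝓐 𝓛 Fd ∈ (subN : NonUnitalSubalgebra K 𝓛) :=
    ⟨Fn, Fd, h0d, h0n, rfl⟩
  have ht1 : Transcendental K h1 := by
    have := transc (subM m) hSM h1M (inv_ne_zero h10)
    exact transc_of_inv this
  have hden : ∀ {x : 𝓛}, Transcendental K x → ∀ g : RatFunc K,
      Polynomial.aeval x g.denom ≠ 0 := by
    intro x hx g h0
    exact g.denom_ne_zero (transcendental_iff.1 hx _ h0)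
  obtain ⟨φ, hφ, hφX⟩ := exists_hom ht1
  have hg1 : algebraMap 𝓐 𝓛 Fn / algebraMap 𝓐 𝓛 Fd = ratEval (ratEval g r) h1 := by
    rw [← hφ, ratEval_map, hφ, hr, hdec]
  have hd1 := core1 (subM m) hSM hfM hf0 h1M h10 _ hg1
  obtain ⟨α, hα⟩ := core2 Fn Fd h0d _ h1 (hden ht1 _) hg1 hd1
  obtain ⟨l, hl1, hl2⟩ := hl α
  have ht2 : Transcendental K (h1 - algebraMap K 𝓛 α) := transc_sub ht1 α
  have h20 : h1 - algebraMap K 𝓛 α ≠ 0 := by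
    intro h0; rw [h0] at ht2; exact ht2 isAlgebraic_zero
  obtain ⟨ψ, hψ, hψX⟩ := exists_hom ht2
  have hg2 : algebraMap 𝓐 𝓛 Fn / algebraMap 𝓐 𝓛 Fd =
      ratEval (ratEval g (ratEval r (RatFunc.X + algebraMap K (RatFunc K) α)))
        (h1 - algebraMap K 𝓛 α) := by
    rw [← hψ, ratEval_map, ratEval_map, map_add, hψX, AlgHom.commutes, sub_add_cancel, hr, hdec]
  exact ⟨l, _, _, hl1, hl2, hg2,
    core1 (subM m) hSM hfM hf0 (subM_shift h10 h1M α) h20 _ hg2,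
    core3 subN (fun c hc => const_subN hc) hfN hα _ (hden ht2 _) hg2⟩

end Helpers


/-- Suppose `f̄ = Fn/Fd` is in lowest terms with `lm Fn > lm Fd`,
`Fn(0,…,0) = 0` and `Fd(0,…,0) ≠ 0`. Then every uni-multivariate decomposition
`f̄ = g(h)` has an equivalent decomposition `f̄ = ḡ(h̄)` (with `h̄ = l(h)` for a
degree-1 unit `l`) such that `deg ḡ_n > deg ḡ_d` and `ḡ_n(0) = 0`. -/
theorem normalized_equivalent_decomposition
    {K : Type*} [Field K] {n : ℕ} (m : MonomialOrder (Fin n))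
    (Fn Fd : MvPolynomial (Fin n) K) (hFd : Fd ≠ 0)
    (hcop : ∀ d : MvPolynomial (Fin n) K, d ∣ Fn → d ∣ Fd → IsUnit d)
    (hlm : mdeg m Fd < mdeg m Fn)
    (h0n : eval (0 : Fin n → K) Fn = 0) (h0d : eval (0 : Fin n → K) Fd ≠ 0)
    (g : RatFunc K) (h : FractionRing (MvPolynomial (Fin n) K))
    (hdec :
      (algebraMap (MvPolynomial (Fin n) K) (FractionRing (MvPolynomial (Fin n) K)) Fn) /
        (algebraMap (MvPolynomial (Fin n) K) (FractionRing (MvPolynomial (Fin n) K)) Fd) =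
      ratEval g h) :
    ∃ (l gbar : RatFunc K) (hbar : FractionRing (MvPolynomial (Fin n) K)),
      max l.num.natDegree l.denom.natDegree = 1 ∧
      hbar = ratEval l h ∧
      (algebraMap (MvPolynomial (Fin n) K) (FractionRing (MvPolynomial (Fin n) K)) Fn) /
        (algebraMap (MvPolynomial (Fin n) K) (FractionRing (MvPolynomial (Fin n) K)) Fd) =
        ratEval gbar hbar ∧
      gbar.denom.natDegree < gbar.num.natDegree ∧
      gbar.num.coeff 0 = 0 := by
  have hw := wdeg_lt_of_mdeg hFd hlm
  have hFn := ne_zero_of_wdeg_lt hw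
  rcases trichotomy m h with ⟨hh0, hhM⟩ | ⟨c, hc⟩
  · refine finish m Fn Fd hFd hlm h0n h0d g h hdec h hh0 hhM RatFunc.X (by simp [ratEval]) ?_
    intro α
    refine ⟨algebraMap (Polynomial K) (RatFunc K) (Polynomial.X - Polynomial.C α), ?_, ?_⟩
    · rw [RatFunc.num_algebraMap, RatFunc.denom_algebraMap]; simp
    · rw [ratEval, RatFunc.num_algebraMap, RatFunc.denom_algebraMap]; simp
  · by_cases hne : h - algebraMap K (FractionRing (MvPolynomial (Fin n) K)) c = 0
    · exfalso
      rw [sub_eq_zero.1 hne] at hdec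
      have e : algebraMap K (FractionRing (MvPolynomial (Fin n) K)) (ratEval g c) =
          ratEval g (algebraMap K (FractionRing (MvPolynomial (Fin n) K)) c) :=
        ratEval_map (Algebra.ofId K (FractionRing (MvPolynomial (Fin n) K))) g c
      rw [← e] at hdec
      have hfM : algebraMap K (FractionRing (MvPolynomial (Fin n) K)) (ratEval g c)⁻¹ ∈ subM m :=
        ⟨Fd, Fn, hw, by rw [map_inv₀, ← hdec, inv_div]⟩
      have h0 := inv_eq_zero.1 (const_subM hfM)
      rw [h0, map_zero] at hdec
      exact div_ne_zero (am_ne hFn) (am_ne hFd) hdec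
    · refine finish m Fn Fd hFd hlm h0n h0d g h hdec
        (h - algebraMap K (FractionRing (MvPolynomial (Fin n) K)) c)⁻¹ (inv_ne_zero hne)
        (by rwa [inv_inv])
        (algebraMap (Polynomial K) (RatFunc K) (Polynomial.C c * Polynomial.X + 1) /
          algebraMap (Polynomial K) (RatFunc K) Polynomial.X) ?_ ?_
      · have hcop : IsCoprime (Polynomial.C c * Polynomial.X + 1 : Polynomial K) Polynomial.X :=
          ⟨1, -Polynomial.C c, by ring⟩
        obtain ⟨e1, e2⟩ := num_denom_of_coprime Polynomial.monic_X hcop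
        rw [ratEval, e1, e2]
        simp only [map_add, map_mul, map_one, Polynomial.aeval_C, Polynomial.aeval_X]
        field_simp
        ring
      · intro α
        have hcop : IsCoprime (1 - Polynomial.C α * (Polynomial.X - Polynomial.C c) : Polynomial K)
            (Polynomial.X - Polynomial.C c) := ⟨1, Polynomial.C α, by ring⟩
        obtain ⟨e1, e2⟩ := num_denom_of_coprime (Polynomial.monic_X_sub_C c) hcop
        refine ⟨algebraMap (Polynomial K) (RatFunc K)
            (1 - Polynomial.C α * (Polynomial.X - Polynomial.C c)) /
          algebraMap (Polynomial K) (RatFunc K) (Polynomial.X - Polynomial.C c), ?_, ?_⟩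
        rotate_left
        · rw [ratEval, e1, e2]
          simp only [map_sub, map_mul, map_one, Polynomial.aeval_C, Polynomial.aeval_X]
          field_simp
        · rw [e1, e2, Polynomial.natDegree_X_sub_C]
          apply max_eq_right
          refine (Polynomial.natDegree_sub_le _ _).trans (max_le (by simp) ?_)
          exact (Polynomial.natDegree_C_mul_le _ _).trans (Polynomial.natDegree_X_sub_C c).le
end
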